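/- arXiv:2205.06625 — 2 statements merged into one kernel-verified Lean document; each statement's English description precedes it below -/
import Mathlib

section
/- Let D ⊆ ℕ be a finite set with 0 ∈ D and containing some d ≥ 2, and let ω : ℕ → ℝ satisfy ω(k) > 0 for k ∈ D and ω(k) = 0 for k ∉ D. For a rooted labeled tree T on n vertices, let Ω(T) = ∏_{v} ω(outdeg(v)), the product over all vertices of the weight of their out-degree. Let S be the set of n ≥ 1 for which some rooted labeled tree T on n vertices has Ω(T) > 0, and for n ∈ S define g_n = (∑ Ω(T₁)·Ω(T₂), summed over ordered pairs (T₁, T₂) of isomorphic rooted labeled trees on n vertices) / (∑_T Ω(T))². Then there exist constants B > 0 and c ∈ (0,1) such that g_n ≤ B · c^n for all n ∈ S. -/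
open scoped Classical BigOperators

/-- A rooted labeled tree on `n` vertices: a simple graph on `Fin n` that is a
tree, together with a distinguished root vertex. -/
structure RTree (n : ℕ) where
  graph : SimpleGraph (Fin n)
  isTree : graph.IsTree
  root : Fin n

namespace RTree

/-- Two rooted labeled trees are isomorphic if there is a graph isomorphism
mapping root to root. -/
def Isom {n : ℕ} (T₁ T₂ : RTree n) : Prop :=
  ∃ φ : T₁.graph ≃g T₂.graph, φ T₁.root = T₂.root

/-- The out-degree (number of children) of a vertex: its degree if it is the
root and its degree minus one otherwise. -/
noncomputable def outdeg {n : ℕ} (T : RTree n) (v : Fin n) : ℕ :=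
  if v = T.root then (T.graph.neighborSet v).ncard
  else (T.graph.neighborSet v).ncard - 1

/-- The number of root-fixing graph automorphisms. -/
noncomputable def autCard {n : ℕ} (T : RTree n) : ℕ :=
  Nat.card {φ : T.graph ≃g T.graph // φ T.root = T.root}

instance finite {n : ℕ} : Finite (RTree n) := by
  have h : Function.Injective (fun T : RTree n => (T.graph, T.root)) := by
    rintro ⟨g₁, h₁, r₁⟩ ⟨g₂, h₂, r₂⟩ h
    simp_all
  exact Finite.of_injective _ h

noncomputable instance fintype {n : ℕ} : Fintype (RTree n) := Fintype.ofFinite _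

end RTree


/-- Bundled finite rooted tree. -/
structure RG where
  V : Type
  ft : Fintype V
  G : SimpleGraph V
  tree : G.IsTree
  r : V

noncomputable instance (X : RG) : Fintype X.V := X.ft

namespace RG

structure RIso (X Y : RG) : Type where
  e : X.G ≃g Y.G
  root : e X.r = Y.r

namespace RIso
def refl (X : RG) : RIso X X := ⟨SimpleGraph.Iso.refl, rfl⟩
def symm {X Y : RG} (f : RIso X Y) : RIso Y X :=
  ⟨f.1.symm, by rw [← f.root]; simp⟩
def trans {X Y Z : RG} (f : RIso X Y) (g : RIso Y Z) : RIso X Z :=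
  ⟨f.1.trans g.1, by simp [f.2, g.2]⟩
theorem ext {X Y : RG} {f g : RIso X Y} (h : ∀ v, f.1 v = g.1 v) : f = g :=
  by
  cases f; cases g
  congr 1
  exact RelIso.ext h
instance finite (X Y : RG) : Finite (RIso X Y) := by
  apply Finite.of_injective (fun f : RIso X Y => (fun v => f.1 v))
  intro f g h
  exact ext (fun v => congrFun h v)
def congr {X Y Z : RG} (g : RIso X Y) : RIso Z X ≃ RIso Z Y where
  toFun f := f.trans g
  invFun f := f.trans g.symm
  left_inv f := ext fun v => by simp [trans, symm]
  right_inv f := ext fun v => by simp [trans, symm]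
def congr' {X Y Z : RG} (g : RIso X Y) : RIso Y Z ≃ RIso X Z where
  toFun f := g.trans f
  invFun f := g.symm.trans f
  left_inv f := ext fun v => by simp [trans, symm]
  right_inv f := ext fun v => by simp [trans, symm]
end RIso

inductive JAdj {k : ℕ} (X : Fin k → RG) :
    Option (Σ i, (X i).V) → Option (Σ i, (X i).V) → Prop
  | up (i) : JAdj X none (some ⟨i, (X i).r⟩)
  | down (i) : JAdj X (some ⟨i, (X i).r⟩) none
  | inn (i) (a b) : (X i).G.Adj a b → JAdj X (some ⟨i, a⟩) (some ⟨i, b⟩)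

def joinG {k : ℕ} (X : Fin k → RG) : SimpleGraph (Option (Σ i, (X i).V)) where
  Adj := JAdj X
  symm := ⟨by
    rintro _ _ (i | i | ⟨i, a, b, h⟩)
    · exact .down i
    · exact .up i
    · exact .inn i b a h.symm⟩
  loopless := ⟨by
    intro x h
    cases h with
    | inn i a b h => exact h.ne rfl⟩

section
variable {k : ℕ} {X : Fin k → RG}

theorem joinG_none_iff {x} : (joinG X).Adj none x ↔ ∃ i, x = some ⟨i, (X i).r⟩ := by
  constructor
  · rintro (i | i | ⟨i, a, b, h⟩)
    exact ⟨i, rfl⟩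
  · rintro ⟨i, rfl⟩
    exact .up i

theorem joinG_some_iff {i a x} : (joinG X).Adj (some ⟨i, a⟩) x ↔
    (a = (X i).r ∧ x = none) ∨ ∃ b, x = some ⟨i, b⟩ ∧ (X i).G.Adj a b := by
  constructor
  · intro h
    cases h with
    | down i => exact .inl ⟨rfl, rfl⟩
    | inn i a b h => exact .inr ⟨b, rfl, h⟩
  · rintro (⟨rfl, rfl⟩ | ⟨b, rfl, h⟩)
    · exact .down i
    · exact .inn i a b h

theorem joinG_same {i a b} : (joinG X).Adj (some ⟨i, a⟩) (some ⟨i, b⟩) ↔ (X i).G.Adj a b := by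
  rw [joinG_some_iff]; simp

def inHom (X : Fin k → RG) (i : Fin k) : (X i).G →g joinG X where
  toFun a := some ⟨i, a⟩
  map_rel' h := joinG_same.2 h

theorem joinG_connected : (joinG X).Connected := by
  have h : ∀ x, (joinG X).Reachable none x := by
    rintro (_ | ⟨i, a⟩)
    · exact .refl _
    · have h1 : (joinG X).Adj none (some ⟨i, (X i).r⟩) := .up i
      have h2 := ((X i).tree.1.preconnected (X i).r a).map (inHom X i)
      exact h1.reachable.trans h2
  exact { preconnected := fun x y => (h x).symm.trans (h y), nonempty := ⟨none⟩ }

theorem reach_of_step {V : Type} {G : SimpleGraph V} (P : V → V → Prop)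
    (hr : ∀ a, P a a) (hs : ∀ a b c, G.Adj a b → P b c → P a c) {a b : V}
    (h : G.Reachable a b) : P a b := by
  obtain ⟨w⟩ := h
  induction w with
  | nil => exact hr _
  | cons h p ih => exact hs _ _ _ h ih

theorem joinG_acyclic : (joinG X).IsAcyclic := by
  rw [SimpleGraph.isAcyclic_iff_forall_adj_isBridge]
  have key : ∀ i, ¬ ((joinG X).deleteEdges {s(none, some ⟨i, (X i).r⟩)}).Reachable (some ⟨i, (X i).r⟩) none := by
    intro i h
    have := reach_of_step (fun a b => (∃ v, a = some ⟨i, v⟩) → (∃ v, b = some ⟨i, v⟩)) (fun a h => h) ?_ h ⟨_, rfl⟩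
    · simp at this
    · rintro a b c hab hbc ⟨v, rfl⟩
      apply hbc
      rw [SimpleGraph.deleteEdges_adj, joinG_some_iff] at hab
      obtain ⟨⟨rfl, rfl⟩ | ⟨b, rfl, h⟩, h2⟩ := hab
      · simp [Sym2.eq_swap] at h2
      · exact ⟨b, rfl⟩
  rintro x y h
  rw [SimpleGraph.isBridge_iff]
  cases h with
  | up i => exact fun h => key i h.symm
  | down i => rw [Sym2.eq_swap]; exact fun h => key i h
  | inn i a b h =>
    intro hr
    have hb := (SimpleGraph.isAcyclic_iff_forall_adj_isBridge.1 (X i).tree.2) h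
    rw [SimpleGraph.isBridge_iff] at hb
    apply hb
    let π : Option (Σ i, (X i).V) → (X i).V := fun x => match x with
      | none => (X i).r
      | some ⟨j, v⟩ => if e : j = i then e ▸ v else (X i).r
    have hπ : ∀ v, π (some ⟨i, v⟩) = v := by intro v; simp [π]
    have hπ' : ∀ j v, j ≠ i → π (some ⟨j, v⟩) = (X i).r := by intro j v h; simp [π, h]
    have := reach_of_step (fun x y => ((X i).G.deleteEdges {s(a, b)}).Reachable (π x) (π y)) (fun a => .refl _) ?_ hr
    · simpa [hπ] using this
    · intro x y z hxy hyz
      refine SimpleGraph.Reachable.trans ?_ hyz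
      rw [SimpleGraph.deleteEdges_adj] at hxy
      obtain ⟨h1, h2⟩ := hxy
      cases h1 with
      | up j =>
        by_cases e : j = i
        · subst e; rw [hπ]
        · rw [hπ' _ _ e]
      | down j =>
        by_cases e : j = i
        · subst e; rw [hπ]
        · rw [hπ' _ _ e]
      | inn j c d hcd =>
        by_cases e : j = i
        · subst e; rw [hπ, hπ]
          apply SimpleGraph.Adj.reachable
          rw [SimpleGraph.deleteEdges_adj]
          refine ⟨hcd, fun h => h2 ?_⟩
          simp at h ⊢
          exact h
        · rw [hπ' _ _ e, hπ' _ _ e]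
end

noncomputable def join {k : ℕ} (X : Fin k → RG) : RG where
  V := Option (Σ i, (X i).V)
  ft := inferInstance
  G := joinG X
  tree := ⟨joinG_connected, joinG_acyclic⟩
  r := none

/-- build isos of joins -/
noncomputable def joinIso {k l : ℕ} {X : Fin k → RG} {Y : Fin l → RG} (σ : Fin k ≃ Fin l)
    (f : ∀ i, RIso (X i) (Y (σ i))) : RIso (join X) (join Y) :=
  ⟨{ toEquiv := Equiv.optionCongr (Equiv.ofBijective
      (fun p : (Σ i, (X i).V) => (⟨σ p.1, (f p.1).1 p.2⟩ : Σ i, (Y i).V)) (by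
        constructor
        · rintro ⟨i, a⟩ ⟨j, b⟩ h
          have : i = j := σ.injective (Sigma.mk.inj h).1
          subst this
          simpa using h
        · rintro ⟨j, b⟩
          obtain ⟨i, rfl⟩ := σ.surjective j
          exact ⟨⟨i, (f i).1.symm b⟩, by simp⟩))
     map_rel_iff' := by
        rintro (_ | ⟨i, a⟩) (_ | ⟨j, b⟩)
        · exact iff_of_false (fun h => (joinG Y).loopless.irrefl _ h) (fun h => (joinG X).loopless.irrefl _ h)
        · change (joinG Y).Adj none (some ⟨σ j, (f j).1 b⟩) ↔ (joinG X).Adj none (some ⟨j, b⟩)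
          rw [joinG_none_iff, joinG_none_iff]
          constructor
          · rintro ⟨i, h⟩
            rw [Option.some_inj] at h
            have e := (Sigma.mk.inj h).1
            subst e
            rw [← (f j).root] at h
            exact ⟨j, by simpa using h⟩
          · rintro ⟨i, h⟩
            rw [Option.some_inj] at h
            have e := (Sigma.mk.inj h).1
            subst e
            exact ⟨σ j, by rw [← (f j).root]; simpa using h⟩
        · change (joinG Y).Adj (some ⟨σ i, (f i).1 a⟩) none ↔ (joinG X).Adj (some ⟨i, a⟩) none
          rw [joinG_some_iff, joinG_some_iff, ← (f i).root]
          simp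
        · change (joinG Y).Adj (some ⟨σ i, (f i).1 a⟩) (some ⟨σ j, (f j).1 b⟩) ↔ (joinG X).Adj (some ⟨i, a⟩) (some ⟨j, b⟩)
          by_cases e : i = j
          · subst e
            rw [joinG_same, joinG_same]
            exact (f i).1.map_rel_iff
          · rw [joinG_some_iff, joinG_some_iff]
            constructor
            · rintro (⟨_, h⟩ | ⟨c, h, _⟩)
              · cases h
              · rw [Option.some_inj] at h
                exact absurd (σ.injective (Sigma.mk.inj h).1).symm e
            · rintro (⟨_, h⟩ | ⟨c, h, _⟩)
              · cases h
              · rw [Option.some_inj] at h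
                exact absurd ((Sigma.mk.inj h).1).symm e },
   rfl⟩

theorem joinIso_some {k l : ℕ} {X : Fin k → RG} {Y : Fin l → RG} (σ : Fin k ≃ Fin l)
    (f : ∀ i, RIso (X i) (Y (σ i))) (i : Fin k) (a : (X i).V) :
    (joinIso σ f).1 (some ⟨i, a⟩ : Option (Σ i, (X i).V)) = (some ⟨σ i, (f i).1 a⟩ : Option (Σ i, (Y i).V)) := rfl

theorem joinIso_inj {k l : ℕ} {X : Fin k → RG} {Y : Fin l → RG} (σ σ' : Fin k ≃ Fin l)
    (f : ∀ i, RIso (X i) (Y (σ i))) (f' : ∀ i, RIso (X i) (Y (σ' i))) (h : joinIso σ f = joinIso σ' f') :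
    ∃ e : σ = σ', e ▸ f = f' := by
  have h1 : ∀ i a, (some ⟨σ i, (f i).1 a⟩ : Option (Σ i, (Y i).V)) = some ⟨σ' i, (f' i).1 a⟩ := by
    intro i a
    rw [← joinIso_some, ← joinIso_some, h]
  have e : σ = σ' := by
    ext i
    have := h1 i (X i).r
    rw [Option.some_inj] at this
    rw [(Sigma.mk.inj this).1]
  subst e
  refine ⟨rfl, ?_⟩
  funext i
  apply RIso.ext
  intro a
  simpa using h1 i a

theorem joinIso_surj {k l : ℕ} {X : Fin k → RG} {Y : Fin l → RG} (φ : RIso (join X) (join Y)) :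
    ∃ (σ : Fin k ≃ Fin l) (f : ∀ i, RIso (X i) (Y (σ i))), joinIso σ f = φ := by
  obtain ⟨φ, hφ0⟩ := φ
  let F : Option (Σ i, (X i).V) → Option (Σ i, (Y i).V) := φ
  have hF0 : F none = none := hφ0
  have hFinj : Function.Injective F := φ.injective
  have hFsurj : Function.Surjective F := φ.surjective
  have hFadj : ∀ x y, (joinG Y).Adj (F x) (F y) ↔ (joinG X).Adj x y := fun x y => φ.map_rel_iff
  have h1 : ∀ i, ∃ j, F (some ⟨i, (X i).r⟩) = some ⟨j, (Y j).r⟩ := by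
    intro i
    rw [← joinG_none_iff, ← hF0, hFadj]
    exact .up i
  choose σ hσ using h1
  have h2 : ∀ i a, ∃ b, F (some ⟨i, a⟩) = some ⟨σ i, b⟩ := by
    intro i a
    refine reach_of_step (fun a c => (∃ b, F (some ⟨i, a⟩) = some ⟨σ i, b⟩) → ∃ b, F (some ⟨i, c⟩) = some ⟨σ i, b⟩)
      (fun a h => h) ?_ ((X i).tree.1.preconnected (X i).r a) ⟨_, hσ i⟩
    rintro a b c hab hbc ⟨v, hv⟩
    apply hbc
    have := (hFadj _ _).2 (joinG_same.2 hab)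
    rw [hv, joinG_some_iff] at this
    obtain ⟨_, h⟩ | ⟨d, h, _⟩ := this
    · rw [← hF0] at h
      cases hFinj h
    · exact ⟨d, h⟩
  choose f hf using h2
  have hfr : ∀ i, f i (X i).r = (Y (σ i)).r := by
    intro i
    have := (hf i (X i).r).symm.trans (hσ i)
    simpa using this
  have σinj : Function.Injective σ := by
    intro i j h
    have : F (some ⟨i, (X i).r⟩) = F (some ⟨j, (X j).r⟩) := by rw [hσ, hσ, h]
    have := hFinj this
    rw [Option.some_inj] at this
    exact (Sigma.mk.inj this).1
  have σsurj : Function.Surjective σ := by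
    intro j
    obtain ⟨x, hx⟩ := hFsurj (some ⟨j, (Y j).r⟩)
    have : (joinG X).Adj none x := by
      rw [← hFadj, hx, hF0]; exact .up j
    obtain ⟨i, rfl⟩ := joinG_none_iff.1 this
    rw [hσ, Option.some_inj] at hx
    exact ⟨i, (Sigma.mk.inj hx).1⟩
  have finj : ∀ i, Function.Injective (f i) := by
    intro i a b h
    have : F (some ⟨i, a⟩) = F (some ⟨i, b⟩) := by rw [hf, hf, h]
    simpa using hFinj this
  have fsurj : ∀ i, Function.Surjective (f i) := by
    intro i b
    obtain ⟨x, hx⟩ := hFsurj (some ⟨σ i, b⟩)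
    rcases x with _ | ⟨j, a⟩
    · rw [hF0] at hx; cases hx
    · rw [hf] at hx
      have e := σinj (Sigma.mk.inj (Option.some_inj.1 hx)).1
      subst e
      exact ⟨a, by simpa using hx⟩
  refine ⟨Equiv.ofBijective σ ⟨σinj, σsurj⟩, fun i => ⟨{ toEquiv := Equiv.ofBijective (f i) ⟨finj i, fsurj i⟩, map_rel_iff' := ?_ }, hfr i⟩, ?_⟩
  · intro a b
    have := hFadj (some ⟨i, a⟩) (some ⟨i, b⟩)
    rw [hf, hf, joinG_same, joinG_same] at this
    exact this
  · apply RIso.ext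
    rintro (_ | ⟨i, a⟩)
    · exact hφ0.symm
    · exact (hf i a).symm

end RG


namespace RG

def attG (X Y : RG) : SimpleGraph (X.V ⊕ Y.V) where
  Adj x y := match x, y with
    | .inl a, .inl b => X.G.Adj a b
    | .inr a, .inr b => Y.G.Adj a b
    | .inl a, .inr b => a = X.r ∧ b = Y.r
    | .inr b, .inl a => a = X.r ∧ b = Y.r
  symm := ⟨by
    rintro (a | a) (b | b) h
    · exact h.symm
    · exact h
    · exact h
    · exact h.symm⟩
  loopless := ⟨by
    rintro (a | a) h
    · exact X.G.loopless.irrefl _ h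
    · exact Y.G.loopless.irrefl _ h⟩

def attCongr {X Y X' Y' : RG} (f : RIso X X') (g : RIso Y Y') : attG X Y ≃g attG X' Y' where
  toEquiv := Equiv.sumCongr f.e.toEquiv g.e.toEquiv
  map_rel_iff' := by
    rintro (a | a) (b | b)
    · exact f.e.map_rel_iff
    · change f.e a = X'.r ∧ g.e b = Y'.r ↔ a = X.r ∧ b = Y.r
      rw [← f.root, ← g.root]; simp
    · change f.e b = X'.r ∧ g.e a = Y'.r ↔ b = X.r ∧ a = Y.r
      rw [← f.root, ← g.root]; simp
    · exact g.e.map_rel_iff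

def toJoin {k : ℕ} (X : Fin (k+1) → RG) : (X 0).V ⊕ Option (Σ i : Fin k, (X i.succ).V) → Option (Σ i, (X i).V)
  | .inl a => some ⟨0, a⟩
  | .inr none => none
  | .inr (some ⟨i, a⟩) => some ⟨i.succ, a⟩

theorem toJoin_bij {k : ℕ} (X : Fin (k+1) → RG) : Function.Bijective (toJoin X) := by
  constructor
  · rintro (a | _ | ⟨i, a⟩) (b | _ | ⟨j, b⟩) h
    · simp [toJoin] at h; simp [h]
    · simp [toJoin] at h
    · simp only [toJoin, Option.some_inj] at h
      have := (Sigma.mk.inj h).1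
      exact absurd this.symm (Fin.succ_ne_zero j)
    · simp [toJoin] at h
    · rfl
    · simp [toJoin] at h
    · simp only [toJoin, Option.some_inj] at h
      have := (Sigma.mk.inj h).1
      exact absurd this (Fin.succ_ne_zero i)
    · simp [toJoin] at h
    · simp only [toJoin, Option.some_inj] at h
      have := (Sigma.mk.inj h).1
      have := Fin.succ_injective _ this
      subst this
      simp at h; simp [h]
  · rintro (_ | ⟨i, a⟩)
    · exact ⟨.inr none, rfl⟩
    · revert a
      refine Fin.cases ?_ ?_ i
      · intro a; exact ⟨.inl a, rfl⟩
      · intro i a; exact ⟨.inr (some ⟨i, a⟩), rfl⟩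

noncomputable def attJoin {k : ℕ} (X : Fin (k+1) → RG) :
    attG (X 0) (join fun i : Fin k => X i.succ) ≃g joinG X where
  toEquiv := Equiv.ofBijective (toJoin X) (toJoin_bij X)
  map_rel_iff' := by
    rintro (a | _ | ⟨i, a⟩) (b | _ | ⟨j, b⟩)
    · change (joinG X).Adj (some ⟨0, a⟩) (some ⟨0, b⟩) ↔ _
      rw [joinG_same]; rfl
    · change (joinG X).Adj (some ⟨0, a⟩) none ↔ a = (X 0).r ∧ _ = _
      rw [joinG_some_iff]; simp [join]
    · change (joinG X).Adj (some ⟨0, a⟩) (some ⟨j.succ, b⟩) ↔ a = (X 0).r ∧ _ = _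
      rw [joinG_some_iff]; simp [join]
    · change (joinG X).Adj none (some ⟨0, b⟩) ↔ b = (X 0).r ∧ _ = _
      rw [SimpleGraph.adj_comm, joinG_some_iff]; simp [join]
    · exact iff_of_false (fun h => (joinG X).loopless.irrefl _ h) (fun h => (attG _ _).loopless.irrefl _ h)
    · change (joinG X).Adj none (some ⟨j.succ, b⟩) ↔ (joinG fun i : Fin k => X i.succ).Adj none (some ⟨j, b⟩)
      rw [SimpleGraph.adj_comm, joinG_some_iff, SimpleGraph.adj_comm, joinG_some_iff]; simp
    · change (joinG X).Adj (some ⟨i.succ, a⟩) (some ⟨0, b⟩) ↔ b = (X 0).r ∧ _ = _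
      rw [joinG_some_iff]; simp [join]
      intro x h; exact absurd h.symm (Fin.succ_ne_zero i)
    · change (joinG X).Adj (some ⟨i.succ, a⟩) none ↔ (joinG fun i : Fin k => X i.succ).Adj (some ⟨i, a⟩) none
      rw [joinG_some_iff, joinG_some_iff]; simp
    · change (joinG X).Adj (some ⟨i.succ, a⟩) (some ⟨j.succ, b⟩) ↔ (joinG fun i : Fin k => X i.succ).Adj (some ⟨i, a⟩) (some ⟨j, b⟩)
      by_cases e : i = j
      · subst e
        rw [joinG_same, joinG_same]
      · rw [joinG_some_iff, joinG_some_iff]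
        constructor
        · rintro (⟨_, h⟩ | ⟨c, h, _⟩)
          · cases h
          · rw [Option.some_inj] at h
            exact absurd (Fin.succ_injective _ (Sigma.mk.inj h).1).symm e
        · rintro (⟨_, h⟩ | ⟨c, h, _⟩)
          · cases h
          · rw [Option.some_inj] at h
            exact absurd ((Sigma.mk.inj h).1).symm e

noncomputable def autc (X : RG) : ℕ := Nat.card (RIso X X)

theorem autc_pos (X : RG) : 0 < autc X := by
  have : Nonempty (RIso X X) := ⟨RIso.refl X⟩
  exact Nat.card_pos

theorem autc_join_att {k : ℕ} (X : Fin (k+1) → RG) :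
    autc (X 0) * autc (join fun i : Fin k => X i.succ) ≤ autc (join X) := by
  unfold autc
  rw [← Nat.card_prod]
  let E := attJoin X
  have hE : ∀ x, E x = toJoin X x := fun x => rfl
  have hE' : E.symm none = .inr none := by
    rw [RelIso.symm_apply_eq]; rfl
  let F : RIso (X 0) (X 0) × RIso (join fun i : Fin k => X i.succ) (join fun i : Fin k => X i.succ) →
      RIso (join X) (join X) := fun p =>
    ⟨(E.symm.trans (attCongr p.1 p.2)).trans E, by
      change E (attCongr p.1 p.2 (E.symm none)) = none
      rw [hE']
      change E (.inr (p.2.e none)) = none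
      have : p.2.e none = none := p.2.root
      rw [this]; rfl⟩
  apply Nat.card_le_card_of_injective F
  rintro ⟨f, g⟩ ⟨f', g'⟩ h
  have h1 : ∀ x, attCongr f g x = attCongr f' g' x := by
    intro x
    have := congrArg (fun q : RIso (join X) (join X) => q.e (E x)) h
    have h2 : E (attCongr f g (E.symm (E x))) = E (attCongr f' g' (E.symm (E x))) := this
    simpa using h2
  have hf : f = f' := RIso.ext fun v => Sum.inl_injective (h1 (.inl v))
  have hg : g = g' := RIso.ext fun v => Sum.inr_injective (h1 (.inr v))
  rw [hf, hg]

theorem autc_join_prod {k : ℕ} (X : Fin k → RG) :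
    ∏ i, autc (X i) ≤ autc (join X) := by
  unfold autc
  rw [← Nat.card_pi]
  apply Nat.card_le_card_of_injective (fun f : ∀ i, RIso (X i) (X i) =>
    joinIso (X := X) (Y := X) (Equiv.refl _) f)
  intro f g h
  obtain ⟨_, h⟩ := joinIso_inj _ _ _ _ h
  exact h

theorem autc_congr {X Y : RG} (f : RIso X Y) : autc X = autc Y :=
  Nat.card_congr ((RIso.congr f).trans (RIso.congr' f.symm))

noncomputable def od (X : RG) (v : X.V) : ℕ :=
  if v = X.r then (X.G.neighborSet v).ncard else (X.G.neighborSet v).ncard - 1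

theorem od_root (X : RG) {v : X.V} (h : v = X.r) : od X v = (X.G.neighborSet v).ncard := if_pos h
theorem od_ne (X : RG) {v : X.V} (h : v ≠ X.r) : od X v = (X.G.neighborSet v).ncard - 1 := if_neg h

theorem od_iso {X Y : RG} (f : RIso X Y) (v : X.V) : od Y (f.e v) = od X v := by
  unfold od
  have h1 : (f.e v = Y.r) ↔ v = X.r := by rw [← f.root]; simp
  have h2 : Y.G.neighborSet (f.e v) = f.e '' (X.G.neighborSet v) := by
    ext w
    obtain ⟨w, rfl⟩ := f.e.surjective w
    simp
    exact f.e.map_rel_iff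
  rw [h2, Set.ncard_image_of_injective _ f.e.injective]
  simp [h1]

theorem od_join_none {k : ℕ} (X : Fin k → RG) : od (join X) (none : Option (Σ i, (X i).V)) = k := by
  have : (joinG X).neighborSet none = Set.range fun i => some ⟨i, (X i).r⟩ := by
    ext x
    rw [SimpleGraph.mem_neighborSet, joinG_none_iff]
    simp [eq_comm]
  refine (od_root (join X) rfl).trans ?_
  change ((joinG X).neighborSet none).ncard = k
  rw [this, ← Set.image_univ, Set.ncard_image_of_injective]
  · simp
  · intro i j h
    simp only [Option.some_inj] at h
    exact (Sigma.mk.inj h).1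

theorem od_join_some {k : ℕ} (X : Fin k → RG) (i) (a : (X i).V) :
    od (join X) (some ⟨i, a⟩ : Option (Σ i, (X i).V)) = od (X i) a := by
  have h0 : (some ⟨i, a⟩ : Option (Σ i, (X i).V)) ≠ (join X).r := by simp [join]
  refine (od_ne (join X) h0).trans ?_
  unfold od
  change ((joinG X).neighborSet (some ⟨i, a⟩)).ncard - 1 = _
  have inj : Function.Injective fun b => (some ⟨i, b⟩ : Option (Σ i, (X i).V)) := by
    intro a b h; simpa using h
  by_cases h : a = (X i).r
  · have : (joinG X).neighborSet (some ⟨i, a⟩) = insert none ((fun b => some ⟨i, b⟩) '' ((X i).G.neighborSet a)) := by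
      ext x
      rw [SimpleGraph.mem_neighborSet, joinG_some_iff]
      simp [h, eq_comm, and_comm]
    rw [this, Set.ncard_insert_of_notMem (by simp), Set.ncard_image_of_injective _ inj, if_pos h]
    simp
  · have : (joinG X).neighborSet (some ⟨i, a⟩) = ((fun b => some ⟨i, b⟩) '' ((X i).G.neighborSet a)) := by
      ext x
      rw [SimpleGraph.mem_neighborSet, joinG_some_iff]
      simp [h, eq_comm, and_comm]
    rw [this, Set.ncard_image_of_injective _ inj, if_neg h]

end RG

inductive PT where
  | node (k : ℕ) (c : Fin k → PT) : PT

namespace PT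
open RG

noncomputable def real : PT → RG
  | node _ c => join fun i => real (c i)

theorem real_node {k} (c : Fin k → PT) : real (node k c) = join fun i => real (c i) := rfl

def size : PT → ℕ
  | node _ c => 1 + ∑ i, size (c i)

theorem size_node {k} (c : Fin k → PT) : size (node k c) = 1 + ∑ i, size (c i) := rfl

theorem card_real (P : PT) : Fintype.card (real P).V = size P := by
  induction P with
  | node k c ih =>
    have : Fintype.card (real (node k c)).V = Fintype.card (Option (Σ i, (real (c i)).V)) := by
      rw [real_node]
      rfl
    rw [this, Fintype.card_option, Fintype.card_sigma, size_node, add_comm]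
    simp [ih]

theorem realize_aux (n : ℕ) : ∀ X : RG, Fintype.card X.V = n → ∃ P, Nonempty (RIso (real P) X) := by
  induction n using Nat.strong_induction_on with
  | _ n ih =>
  intro X hX
  by_cases hadj : ∃ u, X.G.Adj X.r u
  · obtain ⟨u, hu⟩ := hadj
    let H := X.G.deleteEdges {s(X.r, u)}
    have hbr : ¬ H.Reachable X.r u := by
      have := (SimpleGraph.isAcyclic_iff_forall_adj_isBridge.1 X.tree.2) hu
      exact this
    have hHle : H ≤ X.G := SimpleGraph.deleteEdges_le _
    have hH : ∀ a b, X.G.Adj a b → s(a, b) ≠ s(X.r, u) → H.Adj a b := by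
      intro a b h1 h2
      rw [SimpleGraph.deleteEdges_adj]
      exact ⟨h1, by simpa using h2⟩
    have hcov : ∀ v, H.Reachable u v ∨ H.Reachable X.r v := by
      intro v
      have := reach_of_step (fun a b => (H.Reachable u b ∨ H.Reachable X.r b) → (H.Reachable u a ∨ H.Reachable X.r a))
        (fun a h => h) ?_ (X.tree.1.preconnected v u) (.inl (.refl _))
      · exact this
      · intro a b c hab hbc h
        have h := hbc h
        by_cases e : s(a, b) = s(X.r, u)
        · rw [Sym2.eq_iff] at e
          obtain ⟨rfl, rfl⟩ | ⟨rfl, rfl⟩ := e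
          · exact .inr (.refl _)
          · exact .inl (.refl _)
        · have := (hH _ _ hab e).symm.reachable
          exact h.imp (fun h => h.trans this) (fun h => h.trans this)
    let C1 := H.connectedComponentMk u
    let C2 := H.connectedComponentMk X.r
    have hHac : H.IsAcyclic := X.tree.2.anti hHle
    let S : Set X.V := {v | H.Reachable u v}
    let S' : Set X.V := {v | ¬ H.Reachable u v}
    have hS1 : ∀ v, v ∈ C1.supp ↔ v ∈ S := by
      intro v
      simp [C1, S, SimpleGraph.ConnectedComponent.mem_supp_iff]
      exact ⟨fun h => h.symm, fun h => h.symm⟩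
    have hS2 : ∀ v, v ∈ C2.supp ↔ v ∈ S' := by
      intro v
      simp [C2, S', SimpleGraph.ConnectedComponent.mem_supp_iff]
      constructor
      · intro h h'
        exact hbr (h.symm.trans h'.symm)
      · intro h
        exact ((hcov v).resolve_left h).symm
    have hS1 : C1.supp = S := Set.ext hS1
    have hS2 : C2.supp = S' := Set.ext hS2
    have hXS : X.G.induce S = H.induce S := by
      ext ⟨a, ha⟩ ⟨b, hb⟩
      simp only [SimpleGraph.comap_adj, Function.Embedding.subtype_apply]
      refine ⟨fun h => hH _ _ h ?_, fun h => hHle h⟩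
      intro e
      rw [Sym2.eq_iff] at e
      obtain ⟨rfl, rfl⟩ | ⟨rfl, rfl⟩ := e
      · exact hbr ha.symm
      · exact hbr hb.symm
    have hXS' : X.G.induce S' = H.induce S' := by
      ext ⟨a, ha⟩ ⟨b, hb⟩
      simp only [SimpleGraph.comap_adj, Function.Embedding.subtype_apply]
      refine ⟨fun h => hH _ _ h ?_, fun h => hHle h⟩
      intro e
      rw [Sym2.eq_iff] at e
      obtain ⟨rfl, rfl⟩ | ⟨rfl, rfl⟩ := e
      · exact hb (.refl _)
      · exact ha (.refl _)
    have t1 : (X.G.induce S).IsTree := by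
      rw [hXS, ← hS1]; exact hHac.isTree_connectedComponent C1
    have t2 : (X.G.induce S').IsTree := by
      rw [hXS', ← hS2]; exact hHac.isTree_connectedComponent C2
    let X1 : RG := ⟨S, inferInstance, _, t1, ⟨u, .refl _⟩⟩
    let X2 : RG := ⟨S', inferInstance, _, t2, ⟨X.r, fun h => hbr h.symm⟩⟩
    have c1 : Fintype.card X1.V < n := by
      rw [← hX]
      exact Fintype.card_subtype_lt (x := X.r) (fun h : H.Reachable u X.r => hbr h.symm)
    have c2 : Fintype.card X2.V < n := by
      rw [← hX]
      exact Fintype.card_subtype_lt (x := u) (fun h : ¬ H.Reachable u u => h (.refl _))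
    obtain ⟨P1, ⟨f1⟩⟩ := ih _ c1 X1 rfl
    obtain ⟨⟨k, c⟩, ⟨f2⟩⟩ := ih _ c2 X2 rfl
    refine ⟨node (k+1) (Fin.cons P1 c), ⟨?_⟩⟩
    have E1 := attJoin (fun i => real ((Fin.cons P1 c : Fin (k+1) → PT) i))
    have hE1 : (attJoin (fun i => real ((Fin.cons P1 c : Fin (k+1) → PT) i))).symm none = .inr none := by
      rw [RelIso.symm_apply_eq]; rfl
    let E2 : attG (real P1) (real (node k c)) ≃g attG X1 X2 := attCongr f1 f2
    let E3 : attG X1 X2 ≃g X.G :=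
      { toEquiv := Equiv.Set.sumCompl S
        map_rel_iff' := by
          rintro (⟨a, ha⟩ | ⟨a, ha⟩) (⟨b, hb⟩ | ⟨b, hb⟩)
          · rfl
          · change X.G.Adj a b ↔ (⟨a, ha⟩ : S) = ⟨u, _⟩ ∧ (⟨b, hb⟩ : S') = ⟨X.r, _⟩
            rw [Subtype.mk.injEq, Subtype.mk.injEq]
            constructor
            · intro h
              by_contra hne
              have : s(a, b) ≠ s(X.r, u) := by
                intro e
                rw [Sym2.eq_iff] at e
                obtain ⟨rfl, rfl⟩ | ⟨rfl, rfl⟩ := e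
                · exact hbr ha.symm
                · exact hne ⟨rfl, rfl⟩
              exact hb (ha.trans (hH _ _ h this).reachable)
            · rintro ⟨rfl, rfl⟩; exact hu.symm
          · change X.G.Adj a b ↔ (⟨b, hb⟩ : S) = ⟨u, _⟩ ∧ (⟨a, ha⟩ : S') = ⟨X.r, _⟩
            rw [Subtype.mk.injEq, Subtype.mk.injEq]
            constructor
            · intro h
              by_contra hne
              have : s(b, a) ≠ s(X.r, u) := by
                intro e
                rw [Sym2.eq_iff] at e
                obtain ⟨rfl, rfl⟩ | ⟨rfl, rfl⟩ := e
                · exact hbr hb.symm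
                · exact hne ⟨rfl, rfl⟩
              exact ha (hb.trans (hH _ _ h.symm this).reachable)
            · rintro ⟨rfl, rfl⟩; exact hu
          · rfl }
    refine ⟨((attJoin (fun i => real ((Fin.cons P1 c : Fin (k+1) → PT) i))).symm.trans E2).trans E3, ?_⟩
    change E3 (E2 ((attJoin (fun i => real ((Fin.cons P1 c : Fin (k+1) → PT) i))).symm none)) = X.r
    rw [hE1]
    change E3 (.inr (f2.e (real (node k c)).r)) = X.r
    rw [f2.root]
    rfl
  · push Not at hadj
    have hs : ∀ v, X.r = v := by
      intro v
      have := reach_of_step (fun a b => X.r = a → X.r = b) (fun a h => h) ?_ (X.tree.1.preconnected X.r v) rfl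
      · exact this
      · rintro a b c hab _ rfl
        exact absurd hab (hadj b)
    refine ⟨node 0 Fin.elim0, ⟨?_⟩⟩
    have hs' : ∀ v : Option (Σ i : Fin 0, (real (Fin.elim0 i)).V), v = none := by
      rintro (_ | ⟨i, a⟩)
      · rfl
      · exact i.elim0
    refine ⟨{ toFun := fun _ => X.r, invFun := fun _ => (none : Option (Σ i : Fin 0, (real (Fin.elim0 i)).V)), left_inv := fun v => (hs' v).symm, right_inv := fun v => hs v, map_rel_iff' := ?_ }, rfl⟩
    intro a b
    have : a = b := (hs' a).trans (hs' b).symm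
    subst this
    exact iff_of_false (X.G.loopless.irrefl _) ((real _).G.loopless.irrefl _)

theorem realize (X : RG) : ∃ P, Nonempty (RIso (real P) X) := realize_aux _ X rfl

end PT

open scoped NNReal ENNReal

namespace PT
open RG

noncomputable def Om (ω : ℕ → ℝ≥0) : PT → ℝ≥0
  | node k c => ω k * ∏ i, Om ω (c i)

def Fa : PT → ℕ
  | node k c => Nat.factorial k * ∏ i, Fa (c i)

theorem Om_node (ω : ℕ → ℝ≥0) {k} (c : Fin k → PT) : Om ω (node k c) = ω k * ∏ i, Om ω (c i) := rfl
theorem Fa_node {k} (c : Fin k → PT) : Fa (node k c) = Nat.factorial k * ∏ i, Fa (c i) := rfl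

theorem Fa_pos (P : PT) : 0 < Fa P := by
  induction P with
  | node k c ih => rw [Fa_node]; exact Nat.mul_pos (Nat.factorial_pos _) (Finset.prod_pos fun i _ => ih i)

theorem size_pos (P : PT) : 0 < size P := by
  cases P; rw [size_node]; omega

def Iso (P Q : PT) : Prop := Nonempty (RIso (real P) (real Q))

theorem Iso.symm {P Q : PT} (h : Iso P Q) : Iso Q P := h.map RIso.symm

theorem Iso.destruct {k l} {c : Fin k → PT} {d : Fin l → PT} (h : Iso (node k c) (node l d)) :
    ∃ σ : Fin k ≃ Fin l, ∀ i, Iso (c i) (d (σ i)) := by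
  obtain ⟨f⟩ := h
  obtain ⟨σ, f, -⟩ := joinIso_surj (X := fun i => real (c i)) (Y := fun i => real (d i)) f
  exact ⟨σ, fun i => ⟨f i⟩⟩

theorem iso_inv {M : Type} [CommMonoid M] (g : PT → M) (h : ℕ → M)
    (hg : ∀ k (c : Fin k → PT), g (node k c) = h k * ∏ i, g (c i)) {P Q : PT} (hPQ : Iso P Q) :
    g P = g Q := by
  induction P generalizing Q with
  | node k c ih =>
    obtain ⟨l, d⟩ := Q
    obtain ⟨σ, hσ⟩ := hPQ.destruct
    have : k = l := by simpa using Fintype.card_congr σ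
    subst this
    rw [hg, hg]
    congr 1
    rw [← Equiv.prod_comp σ (fun i => g (d i))]
    exact Finset.prod_congr rfl fun i _ => ih i (hσ i)

theorem Om_iso (ω : ℕ → ℝ≥0) {P Q : PT} (h : Iso P Q) : Om ω P = Om ω Q :=
  iso_inv (Om ω) ω (fun _ _ => rfl) h
theorem Fa_iso {P Q : PT} (h : Iso P Q) : Fa P = Fa Q :=
  iso_inv Fa Nat.factorial (fun _ _ => rfl) h
theorem size_iso {P Q : PT} (h : Iso P Q) : size P = size Q := by
  rw [← card_real, ← card_real]
  exact Fintype.card_congr h.some.e.toEquiv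

theorem Om_eq (ω : ℕ → ℝ≥0) (P : PT) : Om ω P = ∏ v, ω (od (real P) v) := by
  induction P with
  | node k c ih =>
    rw [Om_node]
    have : ∏ v, ω (od (real (node k c)) v) =
      ∏ v : Option (Σ i, (real (c i)).V), ω (od (join fun i => real (c i)) v) := rfl
    rw [this, Fintype.prod_option, Fintype.prod_sigma]
    congr 1
    · congr 1; exact (od_join_none _).symm
    · apply Finset.prod_congr rfl
      intro i _
      rw [ih]
      apply Finset.prod_congr rfl
      intro a _
      congr 1; exact (od_join_some (fun i => real (c i)) i a).symm

theorem E_card (P : PT) : Nat.card (Σ Q, RIso (real Q) (real P)) = Fa P := by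
  induction P with
  | node k d ih =>
    let g : (Σ σ : Fin k ≃ Fin k, ∀ i, Σ Q, RIso (real Q) (real (d (σ i)))) →
        (Σ Q, RIso (real Q) (real (node k d))) := fun p =>
      ⟨node k fun i => (p.2 i).1, joinIso (X := fun i => real (p.2 i).1) (Y := fun i => real (d i)) p.1 fun i => (p.2 i).2⟩
    have hg : Function.Bijective g := by
      constructor
      · rintro ⟨σ, x⟩ ⟨σ', x'⟩ h
        have h1 := (Sigma.mk.inj h).1
        have h2 := (Sigma.mk.inj h).2
        simp only [node.injEq, heq_eq_eq, true_and] at h1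
        obtain ⟨c, f, rfl⟩ : ∃ (c : Fin k → PT) (f : ∀ i, RIso (real (c i)) (real (d (σ i)))), x = fun i => ⟨c i, f i⟩ :=
          ⟨fun i => (x i).1, fun i => (x i).2, rfl⟩
        obtain ⟨c', f', rfl⟩ : ∃ (c : Fin k → PT) (f : ∀ i, RIso (real (c i)) (real (d (σ' i)))), x' = fun i => ⟨c i, f i⟩ :=
          ⟨fun i => (x' i).1, fun i => (x' i).2, rfl⟩
        have h1 : c = c' := h1
        subst h1
        have h2 := eq_of_heq h2
        obtain ⟨e, h3⟩ := joinIso_inj (X := fun i => real (c i)) (Y := fun i => real (d i)) σ σ' f f' h2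
        subst e
        have h3 : f = f' := h3
        rw [h3]
      · rintro ⟨⟨l, c⟩, f⟩
        obtain ⟨σ, f, rfl⟩ := joinIso_surj (X := fun i => real (c i)) (Y := fun i => real (d i)) f
        have : l = k := by simpa using Fintype.card_congr σ
        subst this
        exact ⟨⟨σ, fun i => ⟨c i, f i⟩⟩, rfl⟩
    rw [← Nat.card_congr (Equiv.ofBijective g hg)]
    have : ∀ σ : Fin k ≃ Fin k, Finite (∀ i, Σ Q, RIso (real Q) (real (d (σ i)))) := by
      intro σ
      have : ∀ i, Finite (Σ Q, RIso (real Q) (real (d (σ i)))) := by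
        intro i
        apply Nat.finite_of_card_ne_zero
        rw [ih]; exact (Fa_pos _).ne'
      infer_instance
    rw [Nat.card_sigma]
    simp_rw [Nat.card_pi, ih]
    rw [Fa_node]
    have : ∀ σ : Fin k ≃ Fin k, ∏ i, Fa (d (σ i)) = ∏ i, Fa (d i) := fun σ => Equiv.prod_comp σ (fun i => Fa (d i))
    simp_rw [this]
    rw [Finset.sum_const, Finset.card_univ, Fintype.card_perm, Fintype.card_fin, smul_eq_mul]

theorem E_sum (P : PT) (g : PT → ℝ≥0∞) (hg : ∀ Q, Iso Q P → g Q = g P) :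
    ∑' x : (Σ Q, RIso (real Q) (real P)), g x.1 = Fa P * g P := by
  have h1 : ∀ x : (Σ Q, RIso (real Q) (real P)), g x.1 = g P := fun x => hg _ ⟨x.2⟩
  simp_rw [h1]
  have : Finite (Σ Q, RIso (real Q) (real P)) := by
    apply Nat.finite_of_card_ne_zero
    rw [E_card]; exact (Fa_pos _).ne'
  rw [ENNReal.tsum_const, ← E_card, ENat.card_eq_coe_natCard]
  simp

theorem mass (P : PT) (g : PT → ℝ≥0∞) (hg : ∀ Q, Iso Q P → g Q = g P) :
    (autc (real P) : ℝ≥0∞) * ∑' Q, (if Iso Q P then g Q else 0) = Fa P * g P := by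
  rw [← E_sum P g hg, ENNReal.tsum_sigma', ← ENNReal.tsum_mul_left]
  apply tsum_congr
  intro Q
  simp only []
  rw [ENNReal.tsum_const, ENat.card_eq_coe_natCard]
  by_cases h : Iso Q P
  · obtain ⟨f⟩ := h
    rw [if_pos ⟨f⟩]
    have : autc (real P) = Nat.card (RIso (real Q) (real P)) := Nat.card_congr (RIso.congr' f)
    rw [this]; simp
  · rw [if_neg h]
    have : IsEmpty (RIso (real Q) (real P)) := not_nonempty_iff.1 h
    simp

noncomputable def wt (ω : ℕ → ℝ≥0) (P : PT) : ℝ≥0 := Om ω P / Fa P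

theorem wt_node (ω : ℕ → ℝ≥0) {k} (c : Fin k → PT) :
    wt ω (node k c) = ω k / Nat.factorial k * ∏ i, wt ω (c i) := by
  unfold wt
  rw [Om_node, Fa_node, Finset.prod_div_distrib]
  push_cast
  rw [mul_div_mul_comm]

theorem wt_iso (ω : ℕ → ℝ≥0) {P Q : PT} (h : Iso P Q) : wt ω P = wt ω Q := by
  unfold wt; rw [Om_iso ω h, Fa_iso h]

noncomputable def an (ω : ℕ → ℝ≥0) (n : ℕ) : ℝ≥0∞ := ∑' P, if size P = n then (wt ω P : ℝ≥0∞) else 0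

end PT

namespace RTree
open RG PT

noncomputable def toRG {n} (T : RTree n) : RG := ⟨Fin n, inferInstance, T.graph, T.isTree, T.root⟩

theorem outdeg_eq {n} (T : RTree n) (v : Fin n) : T.outdeg v = od T.toRG v := by
  by_cases h : v = T.root
  · exact (if_pos h).trans (od_root T.toRG h).symm
  · exact (if_neg h).trans (od_ne T.toRG h).symm

noncomputable def Omg (ω : ℕ → ℝ≥0) {n} (T : RTree n) : ℝ≥0 := ∏ v, ω (T.outdeg v)

theorem Omg_eq (ω : ℕ → ℝ≥0) {n} (T : RTree n) (P : PT) (f : RIso (real P) T.toRG) :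
    Omg ω T = Om ω P := by
  rw [Om_eq]
  exact (Fintype.prod_equiv f.e.toEquiv _ (fun v : Fin n => ω (T.outdeg v)) (fun v => by
    congr 1; exact (od_iso f v).symm.trans (outdeg_eq T (f.e v)).symm)).symm

def push {n} (X : RG) (e : X.V ≃ Fin n) : RTree n where
  graph := X.G.map e.toEmbedding
  isTree := (SimpleGraph.Iso.isTree_iff (SimpleGraph.Iso.map e X.G)).1 X.tree
  root := e X.r

def pushIso {n} (X : RG) (e : X.V ≃ Fin n) : RIso X (push X e).toRG :=
  ⟨SimpleGraph.Iso.map e X.G, rfl⟩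

theorem lower (ω : ℕ → ℝ≥0) (n : ℕ) :
    (Nat.factorial n : ℝ≥0∞) * an ω n ≤ ∑ T : RTree n, (Omg ω T : ℝ≥0∞) := by
  have h1 : (Nat.factorial n : ℝ≥0∞) * an ω n = ∑' x : (Σ P, (real P).V ≃ Fin n), (wt ω x.1 : ℝ≥0∞) := by
    rw [an, ENNReal.tsum_sigma', ← ENNReal.tsum_mul_left]
    apply tsum_congr
    intro P
    simp only []
    rw [ENNReal.tsum_const, ENat.card_eq_coe_natCard]
    by_cases h : size P = n
    · rw [if_pos h]
      have e : (real P).V ≃ Fin n := Fintype.equivOfCardEq (by rw [card_real, h, Fintype.card_fin])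
      have : Nat.card ((real P).V ≃ Fin n) = Nat.factorial n := by
        rw [Nat.card_congr (Equiv.equivCongr e (Equiv.refl _)), Nat.card_eq_fintype_card, Fintype.card_perm, Fintype.card_fin]
      rw [this]; simp
    · rw [if_neg h]
      have : IsEmpty ((real P).V ≃ Fin n) := ⟨fun e => h (by rw [← card_real, Fintype.card_congr e, Fintype.card_fin])⟩
      simp
  rw [h1]
  let F : (Σ P, (real P).V ≃ Fin n) → (Σ T : RTree n, Σ P, RIso (real P) T.toRG) :=
    fun x => ⟨push _ x.2, x.1, pushIso _ x.2⟩
  let B : (Σ T : RTree n, Σ P, RIso (real P) T.toRG) → (Σ P, (real P).V ≃ Fin n) :=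
    fun y => ⟨y.2.1, y.2.2.e.toEquiv⟩
  have hF : Function.Injective F := by
    apply Function.LeftInverse.injective (g := B)
    rintro ⟨P, e⟩
    simp only [F, B, pushIso]
    congr 1
  calc _ ≤ ∑' y : (Σ T : RTree n, Σ P, RIso (real P) T.toRG), (wt ω y.2.1 : ℝ≥0∞) :=
        ENNReal.tsum_comp_le_tsum_of_injective hF (fun y => (wt ω y.2.1 : ℝ≥0∞))
    _ = ∑' T : RTree n, ∑' x : (Σ P, RIso (real P) T.toRG), (wt ω x.1 : ℝ≥0∞) := by
        rw [ENNReal.tsum_sigma']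
    _ = ∑ T : RTree n, ∑' x : (Σ P, RIso (real P) T.toRG), (wt ω x.1 : ℝ≥0∞) := tsum_fintype _
    _ ≤ _ := by
      apply Finset.sum_le_sum
      intro T _
      obtain ⟨P, ⟨f⟩⟩ := realize T.toRG
      rw [Omg_eq ω T P f]
      have := E_sum P (fun Q => (wt ω Q : ℝ≥0∞)) (fun Q h => by rw [wt_iso ω h])
      rw [← (Equiv.sigmaCongrRight fun Q => RIso.congr f).tsum_eq]
      refine le_of_eq (this.trans ?_)
      rw [wt]
      norm_cast
      rw [mul_div_cancel₀]
      exact_mod_cast (Fa_pos P).ne'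

theorem upper {n} (T : RTree n) :
    (Finset.univ.filter fun T' => T.Isom T').card * autc T.toRG ≤ Nat.factorial n := by
  have h1 : Nat.card (Σ T' : {T' // T.Isom T'}, RIso T.toRG T'.1.toRG) ≤ Nat.card (Fin n ≃ Fin n) := by
    apply Nat.card_le_card_of_injective (fun x => x.2.e.toEquiv)
    rintro ⟨⟨⟨G1, h1, r1⟩, k1⟩, f1⟩ ⟨⟨⟨G2, h2, r2⟩, k2⟩, f2⟩ h
    obtain ⟨e1, hr1⟩ := f1
    obtain ⟨e2, hr2⟩ := f2
    have hh : ∀ v : Fin n, e1 v = e2 v := fun v => congrFun (congrArg DFunLike.coe h) v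
    have hG : G1 = G2 := by
      ext a b
      obtain ⟨a, rfl⟩ := e1.surjective a
      obtain ⟨b, rfl⟩ := e1.surjective b
      have p1 : G1.Adj (e1 a) (e1 b) ↔ T.graph.Adj a b := e1.map_rel_iff
      have p2 : G2.Adj (e2 a) (e2 b) ↔ T.graph.Adj a b := e2.map_rel_iff
      have p3 : G2.Adj (e1 a) (e1 b) ↔ T.graph.Adj a b :=
        Eq.subst (motive := fun z : Fin n => G2.Adj z (e1 b) ↔ T.graph.Adj a b) (hh a).symm
          (Eq.subst (motive := fun z : Fin n => G2.Adj (e2 a) z ↔ T.graph.Adj a b) (hh b).symm p2)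
      exact p1.trans p3.symm
    have hr : r1 = r2 := by
      have q1 : e1 T.root = r1 := hr1
      have q2 : e2 T.root = r2 := hr2
      exact q1.symm.trans ((hh _).trans q2)
    subst hG hr
    have : e1 = e2 := RelIso.ext hh
    subst this
    rfl
  rw [Nat.card_sigma] at h1
  have h2 : ∀ T' : {T' // T.Isom T'}, Nat.card (RIso T.toRG T'.1.toRG) = autc T.toRG := by
    rintro ⟨T', φ, h⟩
    exact (Nat.card_congr (RIso.congr (⟨φ, h⟩ : RIso T.toRG T'.toRG))).symm
  simp_rw [h2] at h1
  rw [Finset.sum_const, Finset.card_univ, Nat.card_eq_fintype_card, Fintype.card_perm, Fintype.card_fin,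
    smul_eq_mul, Fintype.card_subtype] at h1
  convert h1 using 2

end RTree


theorem analysis_real (D : Finset ℕ) (w : ℕ → ℝ) (hw : ∀ k, 0 ≤ w k) (h0D : 0 ∈ D) (h0 : 0 < w 0)
    (d : ℕ) (hdD : d ∈ D) (hd : 2 ≤ d) (hwd : 0 < w d) :
    ∃ τ ρ : ℝ, 0 < τ ∧ 0 < ρ ∧ ρ * ∑ k ∈ D, w k * τ ^ k = τ ∧
      ρ * ∑ k ∈ D, (k * w k) * τ ^ (k - 1) = 1 ∧
      ∀ x : ℝ, 0 ≤ x → x ≤ ρ * ∑ k ∈ D, w k * x ^ k := by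
  let h : ℝ → ℝ := fun x => ∑ k ∈ D, ((k : ℝ) - 1) * w k * x ^ k
  have hc : Continuous h := by fun_prop
  have hh0 : h 0 = - w 0 := by
    simp only [h]
    rw [Finset.sum_eq_single 0]
    · simp
    · intro b _ hb; simp [hb]
    · intro h; exact absurd h0D h
  let X : ℝ := 1 + w 0 / w d
  have hX1 : 1 ≤ X := by
    have : 0 ≤ w 0 / w d := by positivity
    simp only [X]; linarith
  have hhX : 0 ≤ h X := by
    have hsub : ({0, d} : Finset ℕ) ⊆ D := by
      intro k hk; simp at hk; rcases hk with rfl | rfl <;> assumption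
    have h1 : ∑ k ∈ ({0, d} : Finset ℕ), ((k : ℝ) - 1) * w k * X ^ k ≤ h X := by
      apply Finset.sum_le_sum_of_subset_of_nonneg hsub
      intro k _ hk
      have hk0 : 1 ≤ k := by
        rcases Nat.eq_zero_or_pos k with rfl | h
        · simp at hk
        · exact h
      have : (1 : ℝ) ≤ k := by exact_mod_cast hk0
      have := hw k
      apply mul_nonneg (mul_nonneg (by linarith) this)
      positivity
    refine le_trans ?_ h1
    rw [Finset.sum_pair (by omega)]
    have hdR : (2 : ℝ) ≤ d := by exact_mod_cast hd
    have h3 : X ≤ X ^ d := le_self_pow₀ hX1 (by omega)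
    have h4 : w 0 ≤ w d * X := by
      simp only [X]; rw [mul_add, mul_div_cancel₀ _ hwd.ne']; linarith
    have h5 : w d * X ≤ w d * X ^ d := by gcongr
    have h6 : w d * X ^ d ≤ ((d : ℝ) - 1) * (w d * X ^ d) := by
      have : 0 ≤ w d * X ^ d := by positivity
      nlinarith
    simp
    linarith
  obtain ⟨τ, ⟨hτ0, -⟩, hτ⟩ : (0 : ℝ) ∈ h '' Set.Icc 0 X :=
    intermediate_value_Icc (by linarith) hc.continuousOn ⟨by rw [hh0]; linarith, hhX⟩
  have hτp : 0 < τ := by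
    rcases hτ0.lt_or_eq with h | h
    · exact h
    · subst h; rw [hh0] at hτ; linarith
  set φ := ∑ k ∈ D, w k * τ ^ k with hφ
  set φ' := ∑ k ∈ D, (k * w k) * τ ^ (k - 1) with hφ'
  have hφp : 0 < φ := by
    apply Finset.sum_pos' (fun k _ => by have := hw k; positivity)
    exact ⟨0, h0D, by simpa using h0⟩
  have hpow : ∀ k : ℕ, (k : ℝ) * τ ^ (k - 1) * τ = k * τ ^ k := by
    intro k
    rcases k with _ | k
    · simp
    · rw [mul_assoc, ← pow_succ]; simp
  have key : φ' * τ = φ := by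
    have : φ' * τ - φ = h τ := by
      simp only [hφ, hφ', h]
      rw [Finset.sum_mul, ← Finset.sum_sub_distrib]
      apply Finset.sum_congr rfl
      intro k _
      have := hpow k
      linear_combination w k * this
    linarith
  refine ⟨τ, τ / φ, hτp, by positivity, by rw [← hφ, div_mul_cancel₀ _ hφp.ne'], ?_, ?_⟩
  · rw [div_mul_eq_mul_div, mul_comm, key, div_self hφp.ne']
  · intro x hx
    have b : ∀ k : ℕ, τ ^ k + k * τ ^ (k - 1) * (x - τ) ≤ x ^ k := by
      intro k
      have := one_add_mul_le_pow (a := x / τ - 1) (by have : 0 ≤ x / τ := by positivity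
                                                      linarith) k
      have h2 : 1 + (x / τ - 1) = x / τ := by ring
      rw [h2, div_pow, le_div_iff₀ (by positivity)] at this
      have h3 : (1 + k * (x / τ - 1)) * τ ^ k = τ ^ k + k * τ ^ (k - 1) * (x - τ) := by
        have h4 := hpow k
        field_simp
        linear_combination (τ - x) * h4
      linarith
    have : φ' * x ≤ ∑ k ∈ D, w k * x ^ k := by
      have : φ' * x = ∑ k ∈ D, w k * (τ ^ k + k * τ ^ (k - 1) * (x - τ)) := by
        have : φ' * x = φ + φ' * (x - τ) := by linear_combination key
        rw [this, hφ, hφ', Finset.sum_mul, ← Finset.sum_add_distrib]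
        apply Finset.sum_congr rfl
        intros; ring
      rw [this]
      apply Finset.sum_le_sum
      intro k _
      exact mul_le_mul_of_nonneg_left (b k) (hw k)
    calc x = τ / φ * (φ' * x) := by
          have e : τ / φ * (φ' * x) = (φ' * τ) * x / φ := by ring
          rw [e, key, mul_div_cancel_left₀ _ hφp.ne']
      _ ≤ _ := by gcongr

structure Ctx where
  D : Finset ℕ
  ω : ℕ → ℝ≥0
  h0D : 0 ∈ D
  h0 : 0 < ω 0
  d : ℕ
  hdD : d ∈ D
  hd : 2 ≤ d
  hωd : 0 < ω d
  hsup : ∀ k, k ∉ D → ω k = 0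
  τ : ℝ≥0
  ρ : ℝ≥0
  hτ : 0 < τ
  hρ : 0 < ρ
  eq1 : ρ * ∑ k ∈ D, ω k / Nat.factorial k * τ ^ k = τ
  eq2 : ρ * ∑ k ∈ D, (k * (ω k / Nat.factorial k)) * τ ^ (k - 1) = 1
  eq3 : ∀ x, x ≤ ρ * ∑ k ∈ D, ω k / Nat.factorial k * x ^ k

theorem Ctx.exists (D : Finset ℕ) (ω : ℕ → ℝ≥0) (h0D : 0 ∈ D) (d : ℕ) (hdD : d ∈ D) (hd : 2 ≤ d)
    (hω : ∀ k ∈ D, 0 < ω k) (hω' : ∀ k, k ∉ D → ω k = 0) : ∃ C : Ctx, C.ω = ω := by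
  obtain ⟨τ, ρ, h1, h2, h3, h4, h5⟩ := analysis_real D (fun k => (ω k / Nat.factorial k : ℝ≥0))
    (fun k => NNReal.coe_nonneg _) h0D (by have := hω 0 h0D; simpa using this) d hdD hd
    (by have := hω d hdD
        have : 0 < ω d / (Nat.factorial d : ℝ≥0) := by positivity
        exact_mod_cast this)
  lift τ to ℝ≥0 using h1.le
  lift ρ to ℝ≥0 using h2.le
  refine ⟨⟨D, ω, h0D, hω _ h0D, d, hdD, hd, hω _ hdD, hω', τ, ρ, by exact_mod_cast h1, by exact_mod_cast h2, ?_, ?_, ?_⟩, rfl⟩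
  · exact_mod_cast h3
  · exact_mod_cast h4
  · intro x
    exact_mod_cast h5 x x.2


theorem tsum_pi_prod {α : Type} (f : α → ℝ≥0∞) (k : ℕ) :
    ∑' c : Fin k → α, ∏ i, f (c i) = (∑' a, f a) ^ k := by
  induction k with
  | zero => simp
  | succ k ih =>
    rw [← (Fin.consEquiv fun _ : Fin (k+1) => α).tsum_eq, ENNReal.tsum_prod', pow_succ', ← ih, ← ENNReal.tsum_mul_right]
    apply tsum_congr
    intro a
    rw [← ENNReal.tsum_mul_left]
    apply tsum_congr
    intro c
    rw [Fin.prod_univ_succ]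
    simp [Fin.consEquiv]

namespace PT

def eqv : (Σ k, Fin k → PT) ≃ PT where
  toFun x := node x.1 x.2
  invFun P := match P with | node k c => ⟨k, c⟩
  left_inv _ := rfl
  right_inv P := by cases P; rfl

theorem tsum_node (F : PT → ℝ≥0∞) : ∑' P, F P = ∑' k, ∑' c : Fin k → PT, F (node k c) := by
  rw [← eqv.tsum_eq, ENNReal.tsum_sigma']
  rfl

end PT

namespace Ctx
open PT
variable (C : Ctx)

noncomputable def w (k : ℕ) : ℝ≥0 := C.ω k / Nat.factorial k

noncomputable def fz (z : ℝ≥0∞) (P : PT) : ℝ≥0∞ := wt C.ω P * z ^ size P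

theorem fz_node (z : ℝ≥0∞) {k} (c : Fin k → PT) : C.fz z (node k c) = z * C.w k * ∏ i, C.fz z (c i) := by
  unfold fz w
  rw [wt_node, size_node, pow_add, ← Finset.prod_pow_eq_pow_sum, Finset.prod_mul_distrib]
  push_cast
  ring

noncomputable def A (z : ℝ≥0∞) : ℝ≥0∞ := ∑' P, C.fz z P

noncomputable def phi (x : ℝ≥0∞) : ℝ≥0∞ := ∑ k ∈ C.D, C.w k * x ^ k

theorem w_zero {k} (h : k ∉ C.D) : C.w k = 0 := by
  unfold w; rw [C.hsup k h]; simp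

theorem phi_eq (x : ℝ≥0∞) : ∑' k, C.w k * x ^ k = C.phi x := by
  apply tsum_eq_sum
  intro k hk
  rw [C.w_zero hk]; simp

theorem A_eq (z : ℝ≥0∞) : C.A z = z * C.phi (C.A z) := by
  rw [← phi_eq]
  conv_lhs => rw [A, tsum_node]
  rw [← ENNReal.tsum_mul_left]
  apply tsum_congr
  intro k
  simp_rw [fz_node]
  rw [ENNReal.tsum_mul_left, tsum_pi_prod, mul_assoc]
  rfl

noncomputable def At (N : ℕ) (z : ℝ≥0∞) : ℝ≥0∞ := ∑' P, if size P ≤ N then C.fz z P else 0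

theorem At_succ (N : ℕ) (z : ℝ≥0∞) : C.At (N+1) z ≤ z * C.phi (C.At N z) := by
  rw [← phi_eq]
  conv_lhs => rw [At, tsum_node]
  rw [← ENNReal.tsum_mul_left]
  apply ENNReal.tsum_le_tsum
  intro k
  unfold At
  rw [← tsum_pi_prod, ← mul_assoc, ← ENNReal.tsum_mul_left]
  apply ENNReal.tsum_le_tsum
  intro c
  split_ifs with h
  · rw [fz_node]
    gcongr with i
    rw [if_pos]
    rw [size_node] at h
    have : size (c i) ≤ ∑ i, size (c i) := Finset.single_le_sum (f := fun i => size (c i)) (fun _ _ => Nat.zero_le _) (Finset.mem_univ i)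
    omega
  · exact zero_le

theorem At_le (N : ℕ) : C.At N C.ρ ≤ C.τ := by
  induction N with
  | zero =>
    have : C.At 0 C.ρ = 0 := by
      unfold At
      rw [ENNReal.tsum_eq_zero]
      intro P
      rw [if_neg]
      have := size_pos P; omega
    rw [this]; exact zero_le
  | succ N ih =>
    refine (C.At_succ N _).trans ?_
    have : (C.ρ : ℝ≥0∞) * C.phi (C.At N C.ρ) ≤ C.ρ * C.phi C.τ := by
      unfold phi
      gcongr
    refine this.trans ?_
    unfold phi w
    exact_mod_cast C.eq1.le

theorem A_le : C.A C.ρ ≤ C.τ := by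
  unfold A
  rw [ENNReal.tsum_eq_iSup_sum]
  apply iSup_le
  intro s
  refine le_trans ?_ (C.At_le (s.sup size))
  unfold At
  refine le_trans ?_ (ENNReal.sum_le_tsum s)
  apply Finset.sum_le_sum
  intro P hP
  rw [if_pos (Finset.le_sup (f := size) hP)]

theorem A_top (z : ℝ≥0) (hz : C.ρ < z) : C.A z = ⊤ := by
  by_contra h
  obtain ⟨x, hx⟩ : ∃ x : ℝ≥0, (x : ℝ≥0∞) = C.A z := ⟨_, ENNReal.coe_toNNReal h⟩
  have e := C.A_eq z
  rw [← hx] at e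
  have e' : x = z * ∑ k ∈ C.D, C.ω k / Nat.factorial k * x ^ k := by
    unfold phi w at e
    exact_mod_cast e
  have h3 := C.eq3 x
  have hS : 0 < ∑ k ∈ C.D, C.ω k / Nat.factorial k * x ^ k := by
    apply Finset.sum_pos'
    · intros; exact zero_le
    · exact ⟨0, C.h0D, by simpa using C.h0⟩
  have : x < x := by
    calc x ≤ _ := h3
      _ < z * ∑ k ∈ C.D, C.ω k / Nat.factorial k * x ^ k := by gcongr
      _ = x := e'.symm
  exact lt_irrefl _ this

theorem A_an (z : ℝ≥0∞) : C.A z = ∑' n, an C.ω n * z ^ n := by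
  unfold A an
  simp_rw [← ENNReal.tsum_mul_right]
  rw [ENNReal.tsum_comm]
  apply tsum_congr
  intro P
  rw [tsum_eq_single (size P)]
  · simp [fz]
  · intro n hn; rw [if_neg hn.symm]; simp

noncomputable def bn (n : ℕ) : ℝ≥0∞ := an C.ω n * C.ρ ^ n

theorem bn_le (n : ℕ) : C.bn n ≤ C.τ := by
  refine le_trans ?_ C.A_le
  rw [A_an]
  exact ENNReal.le_tsum n

theorem bn_tendsto : Filter.Tendsto C.bn Filter.atTop (nhds 0) := by
  apply ENNReal.tendsto_atTop_zero_of_tsum_ne_top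
  have := C.A_le
  rw [A_an] at this
  exact (this.trans_lt ENNReal.coe_lt_top).ne

end Ctx


namespace PT

def graft : PT → PT → PT
  | node 0 _, Q => Q
  | node (k+1) c, Q => node (k+1) (Fin.cons (graft (c 0) Q) (Fin.tail c))

theorem graft_zero (c : Fin 0 → PT) (Q) : graft (node 0 c) Q = Q := by rw [graft]
theorem graft_succ {k} (c : Fin (k+1) → PT) (Q) :
  graft (node (k+1) c) Q = node (k+1) (Fin.cons (graft (c 0) Q) (Fin.tail c)) := by rw [graft]

theorem size_graft (P Q : PT) : size (graft P Q) + 1 = size P + size Q := by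
  induction P with
  | node k c ih =>
    rcases k with _ | k
    · rw [graft_zero, size_node]; simp; omega
    · rw [graft_succ, size_node, size_node, Fin.sum_univ_succ, Fin.sum_univ_succ]
      have := ih 0
      simp only [Fin.cons_zero, Fin.cons_succ, Fin.tail]
      omega

theorem wt_graft (ω : ℕ → ℝ≥0) (P Q : PT) : ω 0 * wt ω (graft P Q) = wt ω P * wt ω Q := by
  induction P with
  | node k c ih =>
    rcases k with _ | k
    · rw [graft_zero, wt_node]; simp
    · rw [graft_succ, wt_node, wt_node, Fin.prod_univ_succ, Fin.prod_univ_succ]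
      have := ih 0
      simp only [Fin.cons_zero, Fin.cons_succ, Fin.tail]
      linear_combination (ω (k+1) / (Nat.factorial (k+1) : ℝ≥0) * ∏ i : Fin k, wt ω (c i.succ)) * this

theorem graft_inj (P Q P' Q' : PT) (h : graft P Q = graft P' Q') (hs : size Q = size Q') :
    P = P' ∧ Q = Q' := by
  have hsz : size P = size P' := by
    have h1 := size_graft P Q
    have h2 := size_graft P' Q'
    rw [h] at h1; omega
  induction P generalizing P' with
  | node k c ih =>
    obtain ⟨k', c'⟩ := P'
    have hpos : ∀ {k} (c : Fin (k+1) → PT), 1 < size (node (k+1) c) := by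
      intro k c
      rw [size_node, Fin.sum_univ_succ]
      have := size_pos (c 0)
      omega
    have h1 : ∀ (c : Fin 0 → PT), size (node 0 c) = 1 := by
      intro c; rw [size_node]; simp
    rcases k with _ | k <;> rcases k' with _ | k'
    · rw [graft_zero, graft_zero] at h
      exact ⟨by congr 1; exact Subsingleton.elim _ _, h⟩
    · have := hpos c'; have := h1 c; omega
    · have := hpos c; have := h1 c'; omega
    · rw [graft_succ, graft_succ] at h
      injection h with e1 e2
      have e1 : k = k' := by omega
      subst e1
      have e2 := eq_of_heq e2
      rw [Fin.cons_inj] at e2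
      obtain ⟨e3, e4⟩ := e2
      have hsz' : size (c 0) = size (c' 0) := by
        have h1 := size_graft (c 0) Q
        have h2 := size_graft (c' 0) Q'
        rw [e3] at h1; omega
      obtain ⟨e5, e6⟩ := ih 0 (c' 0) e3 hsz'
      refine ⟨?_, e6⟩
      congr 1
      rw [← Fin.cons_self_tail c, ← Fin.cons_self_tail c', e4, e5]

theorem an_mul (ω : ℕ → ℝ≥0) (n m : ℕ) : an ω (n+1) * an ω (m+1) ≤ ω 0 * an ω (n+m+1) := by
  unfold an
  rw [← ENNReal.tsum_mul_right, ← ENNReal.tsum_mul_left]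
  simp_rw [← ENNReal.tsum_mul_left]
  rw [← ENNReal.tsum_prod' (f := fun x : PT × PT => (if size x.1 = n+1 then (wt ω x.1 : ℝ≥0∞) else 0) * (if size x.2 = m+1 then (wt ω x.2 : ℝ≥0∞) else 0))]
  let S : Set (PT × PT) := {x | size x.1 = n+1 ∧ size x.2 = m+1}
  have : ∀ x : PT × PT, (if size x.1 = n+1 then (wt ω x.1 : ℝ≥0∞) else 0) * (if size x.2 = m+1 then (wt ω x.2 : ℝ≥0∞) else 0)
      = S.indicator (fun x => (wt ω x.1 * wt ω x.2 : ℝ≥0∞)) x := by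
    intro x
    by_cases h1 : size x.1 = n+1 <;> by_cases h2 : size x.2 = m+1 <;> simp [Set.indicator, S, h1, h2]
  simp_rw [this]
  rw [← tsum_subtype]
  let F : S → PT := fun x => graft x.1.1 x.1.2
  have hF : Function.Injective F := by
    rintro ⟨⟨P, Q⟩, h1, h2⟩ ⟨⟨P', Q'⟩, h1', h2'⟩ h
    obtain ⟨rfl, rfl⟩ := graft_inj P Q P' Q' h (by simp only at h2 h2'; omega)
    rfl
  refine le_trans ?_ (ENNReal.tsum_comp_le_tsum_of_injective hF _)
  apply ENNReal.tsum_le_tsum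
  rintro ⟨⟨P, Q⟩, h1, h2⟩
  have h1 : size P = n+1 := h1
  have h2 : size Q = m+1 := h2
  simp only [F]
  rw [if_pos]
  · have := wt_graft ω P Q
    exact_mod_cast this.ge
  · have := size_graft P Q
    omega

end PT

theorem superm (H : ℕ → ℝ≥0) (hmul : ∀ n m, H n * H m ≤ H (n+m)) (q : ℝ≥0) (hq : 0 < q)
    (n0 : ℕ) (hn0 : 1 ≤ n0) (h : q ^ n0 ≤ H n0) : ∃ κ : ℝ≥0, 0 < κ ∧ ∀ n, 0 < H n → κ * q ^ n ≤ H n := by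
  have step : ∀ n j, H n * (q ^ n0) ^ j ≤ H (n + j * n0) := by
    intro n j
    induction j with
    | zero => simp
    | succ j ih =>
      calc H n * (q ^ n0) ^ (j+1) = (H n * (q ^ n0) ^ j) * q ^ n0 := by ring
        _ ≤ H (n + j * n0) * H n0 := by gcongr
        _ ≤ H (n + j * n0 + n0) := hmul _ _
        _ = _ := by congr 1; ring
  have main : ∀ R, ∃ κ : ℝ≥0, 0 < κ ∧ ∀ n, n % n0 < R → 0 < H n → κ * q ^ n ≤ H n := by
    intro R
    induction R with
    | zero => exact ⟨1, one_pos, fun n h => absurd h (Nat.not_lt_zero _)⟩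
    | succ R ih =>
      obtain ⟨κ, hκ, hh⟩ := ih
      by_cases hex : ∃ n, n % n0 = R ∧ 0 < H n
      · let m := Nat.find hex
        obtain ⟨hm1, hm2⟩ := Nat.find_spec hex
        change m % n0 = R at hm1
        change 0 < H m at hm2
        refine ⟨min κ (H m / q ^ m), lt_min hκ (by positivity), ?_⟩
        intro n hn hHn
        rcases Nat.lt_succ_iff_lt_or_eq.1 hn with h1 | h1
        · exact le_trans (by gcongr; exact min_le_left _ _) (hh n h1 hHn)
        · have hmn : m ≤ n := Nat.find_min' hex ⟨h1, hHn⟩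
          have : ∃ j, n = m + j * n0 := by
            have : n0 ∣ n - m := (Nat.modEq_iff_dvd' hmn).1 (hm1.trans h1.symm)
            obtain ⟨j, hj⟩ := this
            exact ⟨j, by rw [mul_comm]; omega⟩
          obtain ⟨j, rfl⟩ := this
          refine le_trans ?_ (step m j)
          calc _ ≤ H m / q ^ m * q ^ (m + j * n0) := by gcongr; exact min_le_right _ _
            _ = H m * (q ^ n0) ^ j := by
              rw [pow_add, ← pow_mul, mul_comm n0 j]; field_simp
      · refine ⟨κ, hκ, ?_⟩
        intro n hn hHn
        rcases Nat.lt_succ_iff_lt_or_eq.1 hn with h1 | h1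
        · exact hh n h1 hHn
        · exact absurd ⟨n, h1, hHn⟩ hex
  obtain ⟨κ, h1, h2⟩ := main n0
  exact ⟨κ, h1, fun n => h2 n (Nat.mod_lt _ (by omega))⟩

namespace Ctx
open PT
variable (C : Ctx)

theorem an_fin (n : ℕ) : an C.ω n ≠ ⊤ := by
  intro h
  have := C.bn_le n
  unfold bn at this
  rw [h, ENNReal.top_mul] at this
  · exact absurd this (by simp)
  · have := C.hρ.ne'
    simp [this]

noncomputable def al (n : ℕ) : ℝ≥0 := (an C.ω n).toNNReal

theorem al_coe (n : ℕ) : (C.al n : ℝ≥0∞) = an C.ω n := ENNReal.coe_toNNReal (C.an_fin n)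

theorem al_mul (n m : ℕ) : C.al (n+1) * C.al (m+1) ≤ C.ω 0 * C.al (n+m+1) := by
  have := an_mul C.ω n m
  rw [← al_coe, ← al_coe, ← al_coe] at this
  exact_mod_cast this

theorem lower_growth (s : ℝ≥0) (hs0 : 0 < s) (hs : s < 1) :
    ∃ κ : ℝ≥0, 0 < κ ∧ ∀ n, 0 < C.al (n+1) → κ * (s ^ 2) ^ (n+1) ≤ C.al (n+1) * C.ρ ^ (n+1) := by
  have hρ := C.hρ
  have h0 := C.h0
  let H : ℕ → ℝ≥0 := fun n => C.al (n+1) * C.ρ ^ n / C.ω 0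
  have hmul : ∀ n m, H n * H m ≤ H (n+m) := by
    intro n m
    simp only [H]
    rw [div_mul_div_comm, div_le_div_iff₀ (by positivity) (by positivity)]
    calc C.al (n+1) * C.ρ ^ n * (C.al (m+1) * C.ρ ^ m) * C.ω 0
        = (C.al (n+1) * C.al (m+1)) * (C.ρ ^ (n+m) * C.ω 0) := by ring
      _ ≤ (C.ω 0 * C.al (n+m+1)) * (C.ρ ^ (n+m) * C.ω 0) := mul_le_mul_left (C.al_mul n m) _
      _ = _ := by ring
  have hex : ∃ n0, 1 ≤ n0 ∧ (s^2)^n0 ≤ H n0 := by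
    by_contra hcon
    push Not at hcon
    have htop := C.A_top (C.ρ / s) (by rw [lt_div_iff₀ hs0]; exact mul_lt_of_lt_one_right hρ hs)
    rw [A_an, tsum_eq_zero_add' ENNReal.summable] at htop
    have hb : ∀ n, H n ≤ (1 + H 0) * (s^2)^n := by
      intro n
      rcases n with _ | n
      · simp
      · refine (hcon (n+1) (by omega)).le.trans ?_
        exact le_mul_of_one_le_left zero_le (le_self_add)
    have hle : ∀ n, an C.ω (n+1) * ((C.ρ / s : ℝ≥0) : ℝ≥0∞) ^ (n+1) ≤
        ((1 + H 0) * C.ω 0 * C.ρ / s : ℝ≥0) * (s : ℝ≥0∞) ^ n := by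
      intro n
      rw [← al_coe]
      norm_cast
      have e : C.al (n+1) * (C.ρ / s) ^ (n+1) = H n * (C.ω 0 * C.ρ / s / s ^ n) := by
        simp only [H]; rw [div_pow, pow_succ, pow_succ]; field_simp
      rw [e]
      calc _ ≤ (1 + H 0) * (s^2)^n * (C.ω 0 * C.ρ / s / s ^ n) := by gcongr; exact hb n
        _ = _ := by rw [← pow_mul, mul_comm 2 n, pow_mul]; field_simp
    have hfin : ∑' n, an C.ω (n+1) * ((C.ρ / s : ℝ≥0) : ℝ≥0∞) ^ (n+1) ≠ ⊤ := by
      refine ((ENNReal.tsum_le_tsum hle).trans_lt ?_).ne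
      rw [ENNReal.tsum_mul_left, ENNReal.tsum_geometric]
      apply ENNReal.mul_lt_top ENNReal.coe_lt_top
      rw [ENNReal.inv_lt_top, tsub_pos_iff_lt]
      exact_mod_cast hs
    rw [ENNReal.add_eq_top] at htop
    rcases htop with h | h
    · simp at h; exact C.an_fin 0 h
    · exact hfin h
  obtain ⟨n0, h1, h2⟩ := hex
  obtain ⟨κ, hκ, hh⟩ := superm H hmul (s^2) (by positivity) n0 h1 h2
  refine ⟨κ * C.ω 0 * C.ρ / s ^ 2, by positivity, ?_⟩
  intro n hn
  have := hh n (by simp only [H]; positivity)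
  simp only [H] at this
  rw [le_div_iff₀ h0] at this
  calc _ = (κ * (s^2)^n * C.ω 0) * C.ρ := by rw [pow_succ (s^2)]; field_simp
    _ ≤ C.al (n+1) * C.ρ ^ n * C.ρ := by gcongr
    _ = _ := by ring

end Ctx


namespace PT

theorem decay (M : PT → ℝ≥0) (K K0 r : ℝ≥0) (dm : ℕ) (hK0 : 1 ≤ K0) (hr : r < 1)
    (F1 : ∀ k (c : Fin k → PT), M (node k c) ≤ K * ∏ i, M (c i))
    (F2 : ∀ k (c : Fin k → PT) j, M (node k c) ≤ r * M (c j))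
    (Fd : ∀ k (c : Fin k → PT), dm < k → M (node k c) = 0)
    (FK : ∀ P, M P ≤ K0)
    (F3 : ∀ η : ℝ≥0, 0 < η → ∃ N, ∀ P, N ≤ size P → M P ≤ η) :
    ∃ B c : ℝ≥0, 0 < B ∧ 0 < c ∧ c < 1 ∧ ∀ P, M P ≤ B * c ^ size P := by
  let K1 := K * K0 ^ dm
  let η : ℝ≥0 := min 1 (1 / (2 * (K1 + 1)))
  have hη : 0 < η := lt_min one_pos (by positivity)
  have hη1 : η ≤ 1 := min_le_left _ _
  have hηK : 2 * (K1 * η) ≤ 1 := by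
    calc 2 * (K1 * η) ≤ 2 * ((K1 + 1) * (1 / (2 * (K1 + 1)))) := by
          gcongr
          · exact le_self_add
          · exact min_le_right _ _
      _ = 1 := by field_simp
  obtain ⟨N, hN⟩ := F3 η hη
  let L := (dm + 1) * N + 1
  have hNL : N ≤ L := by simp only [L]; nlinarith
  let ε : ℝ≥0 := max r (1/2)
  have hε0 : 0 < ε := lt_max_of_lt_right (by positivity)
  have hε1 : ε < 1 := max_lt hr (by rw [div_lt_one (by positivity)]; norm_num)
  let m := L * dm + 1 + L
  obtain ⟨c, hc0, hc1, hcm⟩ : ∃ c : ℝ≥0, 0 < c ∧ c < 1 ∧ c ^ m = ε := by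
    refine ⟨ε ^ ((m : ℝ)⁻¹), NNReal.rpow_pos hε0, ?_, NNReal.rpow_inv_natCast_pow _ (by omega)⟩
    apply NNReal.rpow_lt_one hε1
    have : 0 < m := by omega
    positivity
  have hmono : ∀ {a b : ℕ}, a ≤ b → c ^ b ≤ c ^ a := fun h => pow_le_pow_of_le_one zero_le hc1.le h
  have hcL : ε ≤ c ^ L := by rw [← hcm]; exact hmono (by omega)
  have hcL2 : ε ≤ c ^ (L * dm + 1) := by rw [← hcm]; exact hmono (by omega)
  have claim : ∀ P, N ≤ size P → M P * c ^ L ≤ η * c ^ size P := by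
    intro P
    induction P with
    | node k ch ih =>
      intro hP
      by_cases hk : dm < k
      · rw [Fd k ch hk]; simp
      push Not at hk
      by_cases hlarge : ∃ j, N ≤ size (ch j)
      · obtain ⟨j, hj⟩ := hlarge
        by_cases hlarge2 : ∃ i, i ≠ j ∧ N ≤ size (ch i)
        · obtain ⟨i, hij, hi⟩ := hlarge2
          let t : Fin k → ℝ≥0 := fun i => if N ≤ size (ch i) then η else K0
          have ht : ∀ i, t i ≤ K0 := by
            intro i; simp only [t]; split_ifs
            · exact hη1.trans hK0
            · exact le_rfl
          have hb : ∀ i, M (ch i) * c ^ L ≤ t i * c ^ size (ch i) := by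
            intro i
            by_cases h : N ≤ size (ch i)
            · simp only [t, if_pos h]; exact ih i h
            · simp only [t, if_neg h]
              exact mul_le_mul' (FK _) (hmono (by omega))
          have hprod : ∏ i, t i ≤ η * η * K0 ^ dm := by
            rw [← Finset.mul_prod_erase _ _ (Finset.mem_univ i),
              ← Finset.mul_prod_erase _ _ (Finset.mem_erase.2 ⟨hij.symm, Finset.mem_univ j⟩), ← mul_assoc]
            have e1 : t i = η := if_pos hi
            have e2 : t j = η := if_pos hj
            rw [e1, e2]
            gcongr
            refine (Finset.prod_le_pow_card _ _ K0 (fun x _ => ht x)).trans ?_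
            apply pow_le_pow_right₀ hK0
            refine (Finset.card_le_univ _).trans ?_
            simpa using hk
          have h1 : M (node k ch) * c ^ (L * dm + 1) ≤ K1 * η * η * c ^ size (node k ch) := by
            have h2 : ∏ i, (M (ch i) * c ^ L) ≤ ∏ i, (t i * c ^ size (ch i)) :=
              Finset.prod_le_prod' fun i _ => hb i
            rw [Finset.prod_mul_distrib, Finset.prod_mul_distrib, Finset.prod_const, Finset.card_univ, Fintype.card_fin,
              ← pow_mul, Finset.prod_pow_eq_pow_sum] at h2
            calc M (node k ch) * c ^ (L * dm + 1) ≤ (K * ∏ i, M (ch i)) * c ^ (L * k + 1) :=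
                  mul_le_mul' (F1 k ch) (hmono (by gcongr))
              _ = K * ((∏ i, M (ch i)) * c ^ (L * k)) * c := by ring
              _ ≤ K * ((∏ i, t i) * c ^ (∑ i, size (ch i))) * c := by gcongr
              _ ≤ K * ((η * η * K0 ^ dm) * c ^ (∑ i, size (ch i))) * c := by gcongr
              _ = _ := by rw [size_node, pow_add]; simp only [K1]; ring
          have h3 : M (node k ch) * (1/2) ≤ (1/2) * (η * c ^ size (node k ch)) := by
            calc M (node k ch) * (1/2) ≤ M (node k ch) * c ^ (L * dm + 1) := by
                  gcongr; exact (le_max_right _ _).trans hcL2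
              _ ≤ _ := h1
              _ = (1/2) * (2 * (K1 * η)) * (η * c ^ size (node k ch)) := by
                  field_simp
              _ ≤ (1/2) * 1 * (η * c ^ size (node k ch)) := by gcongr
              _ = _ := by rw [mul_one]
          have h4 : M (node k ch) ≤ η * c ^ size (node k ch) := by
            rw [mul_comm] at h3
            exact le_of_mul_le_mul_left h3 (by positivity)
          exact (mul_le_of_le_one_right zero_le (pow_le_one₀ zero_le hc1.le)).trans h4
        · push Not at hlarge2
          have hsz : size (node k ch) ≤ size (ch j) + L := by
            rw [size_node, ← Finset.add_sum_erase _ _ (Finset.mem_univ j)]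
            have : ∑ i ∈ Finset.univ.erase j, size (ch i) ≤ ∑ i ∈ Finset.univ.erase j, N := by
              apply Finset.sum_le_sum
              intro i hi
              exact (hlarge2 i (Finset.ne_of_mem_erase hi)).le
            rw [Finset.sum_const, smul_eq_mul] at this
            have h2 : (Finset.univ.erase j).card ≤ dm := (Finset.card_le_univ _).trans (by simpa using hk)
            have h3 := Nat.mul_le_mul_right N h2
            simp only [L]
            nlinarith
          have h1 : ε * (M (node k ch) * c ^ L) ≤ ε * (η * c ^ size (node k ch)) := by
            calc ε * (M (node k ch) * c ^ L) ≤ c ^ L * (r * M (ch j) * c ^ L) := by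
                  gcongr; exact F2 k ch j
              _ = r * (M (ch j) * c ^ L) * c ^ L := by ring
              _ ≤ r * (η * c ^ size (ch j)) * c ^ L := mul_le_mul_left (mul_le_mul_right (ih j hj) _) _
              _ = r * (η * c ^ (size (ch j) + L)) := by ring
              _ ≤ ε * (η * c ^ size (node k ch)) := by
                  exact mul_le_mul' (le_max_left _ _) (mul_le_mul_right (hmono hsz) _)
          exact le_of_mul_le_mul_left h1 hε0
      · push Not at hlarge
        have hsz : size (node k ch) ≤ L := by
          rw [size_node]
          have : ∑ i, size (ch i) ≤ ∑ i : Fin k, N := Finset.sum_le_sum fun i _ => (hlarge i).le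
          rw [Finset.sum_const, smul_eq_mul, Finset.card_univ, Fintype.card_fin] at this
          have h3 := Nat.mul_le_mul_right N hk
          simp only [L]; nlinarith
        exact mul_le_mul' (hN _ hP) (hmono hsz)
  refine ⟨K0 / c ^ L, c, by positivity, hc0, hc1, ?_⟩
  intro P
  rw [div_mul_eq_mul_div, le_div_iff₀ (by positivity)]
  by_cases h : N ≤ size P
  · exact (claim P h).trans (mul_le_mul_left (hη1.trans hK0) _)
  · exact mul_le_mul' (FK _) (hmono (by omega))

end PT

namespace Ctx
open PT RG
variable (C : Ctx)

noncomputable def M (P : PT) : ℝ≥0 := Om C.ω P * C.ρ ^ size P / autc (real P)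

theorem autc_posN (P : PT) : (0 : ℝ≥0) < autc (real P) := by exact_mod_cast autc_pos _

theorem M_iso {P Q : PT} (h : Iso P Q) : C.M P = C.M Q := by
  unfold M; rw [Om_iso _ h, size_iso h, autc_congr h.some]

theorem num_node {k} (c : Fin k → PT) :
    Om C.ω (node k c) * C.ρ ^ size (node k c) = C.ρ * C.ω k * ∏ i, (Om C.ω (c i) * C.ρ ^ size (c i)) := by
  rw [Om_node, size_node, pow_add, ← Finset.prod_pow_eq_pow_sum, Finset.prod_mul_distrib]
  ring

theorem M_F1 {k} (c : Fin k → PT) : C.M (node k c) ≤ C.ρ * C.ω k * ∏ i, C.M (c i) := by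
  unfold M
  rw [num_node, Finset.prod_div_distrib, mul_div_assoc]
  have h1 : (∏ i, (autc (real (c i)) : ℝ≥0)) ≤ autc (real (node k c)) := by
    have := autc_join_prod (fun i => real (c i))
    exact_mod_cast this
  have h2 : 0 < ∏ i, (autc (real (c i)) : ℝ≥0) := Finset.prod_pos fun i _ => autc_posN _
  gcongr

noncomputable def u : PT → ℝ≥0∞
  | node k c => C.ρ * ((k + 1 : ℕ) * C.w (k+1)) * ∏ i, C.fz C.ρ (c i)

theorem fz_iso {z} {P Q : PT} (h : Iso P Q) : C.fz z P = C.fz z Q := by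
  unfold fz; rw [wt_iso _ h, size_iso h]

theorem u_iso {P Q : PT} (h : Iso P Q) : C.u P = C.u Q := by
  obtain ⟨k, c⟩ := P
  obtain ⟨l, e⟩ := Q
  obtain ⟨σ, hσ⟩ := h.destruct
  have : k = l := by simpa using Fintype.card_congr σ
  subst this
  rw [u, u]
  congr 1
  rw [← Equiv.prod_comp σ (fun i => C.fz C.ρ (e i))]
  exact Finset.prod_congr rfl fun i _ => C.fz_iso (hσ i)

theorem u_total : ∑' P, C.u P ≤ 1 := by
  rw [tsum_node]
  simp_rw [u, ENNReal.tsum_mul_left, tsum_pi_prod]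
  have h1 : ∀ k, (C.ρ : ℝ≥0∞) * ((k+1 : ℕ) * C.w (k+1)) * (∑' P, C.fz C.ρ P) ^ k
      ≤ C.ρ * (((k+1 : ℕ) * C.w (k+1)) * (C.τ : ℝ≥0∞) ^ (k + 1 - 1)) := by
    intro k
    rw [mul_assoc, Nat.add_sub_cancel]
    have := pow_le_pow_left' C.A_le k
    exact mul_le_mul_right (mul_le_mul_right this _) _
  refine (ENNReal.tsum_le_tsum h1).trans ?_
  rw [ENNReal.tsum_mul_left]
  have h2 := tsum_eq_zero_add' (f := fun k : ℕ => ((k : ℕ) * C.w k : ℝ≥0∞) * (C.τ : ℝ≥0∞) ^ (k - 1)) ENNReal.summable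
  simp only [Nat.cast_zero, zero_mul, zero_add] at h2
  rw [← h2, tsum_eq_sum (s := C.D)]
  · have := C.eq2
    unfold w
    exact_mod_cast this.le
  · intro k hk
    rw [C.w_zero hk]; simp

def leaf : PT := node 0 Fin.elim0

theorem w_pos {k} (h : 0 < C.ω k) : 0 < C.w k := by unfold w; positivity

theorem fz_pos_node {k} (h : 0 < C.ω k) (c : Fin k → PT) (hc : ∀ i, C.fz C.ρ (c i) ≠ 0) : C.fz C.ρ (node k c) ≠ 0 := by
  rw [fz_node]
  refine mul_ne_zero (mul_ne_zero ?_ ?_) (Finset.prod_ne_zero_iff.2 fun i _ => hc i)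
  · exact_mod_cast C.hρ.ne'
  · exact_mod_cast (C.w_pos h).ne'

theorem u_pos_node {k} (h : 0 < C.ω (k+1)) (c : Fin k → PT) (hc : ∀ i, C.fz C.ρ (c i) ≠ 0) : C.u (node k c) ≠ 0 := by
  rw [u]
  refine mul_ne_zero (mul_ne_zero ?_ (mul_ne_zero ?_ ?_)) (Finset.prod_ne_zero_iff.2 fun i _ => hc i)
  · exact_mod_cast C.hρ.ne'
  · exact_mod_cast Nat.succ_ne_zero k
  · exact_mod_cast (C.w_pos h).ne'

theorem u_class : ∃ r : ℝ≥0, r < 1 ∧ ∀ F, ∑' Q, (if Iso Q F then C.u Q else 0) ≤ r := by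
  obtain ⟨e, he⟩ : ∃ e, C.d = e + 2 := ⟨C.d - 2, by have := C.hd; omega⟩
  have hω : 0 < C.ω (e+1+1) := by have := C.hωd; rwa [he] at this
  have hl : C.fz C.ρ leaf ≠ 0 := C.fz_pos_node C.h0 _ (fun i => i.elim0)
  let X : PT := node (e+2) fun _ => leaf
  have hX : C.fz C.ρ X ≠ 0 := C.fz_pos_node hω _ (fun _ => hl)
  let G1 : PT := node (e+1) fun _ => leaf
  let G2 : PT := node (e+1) (Fin.cons X fun _ => leaf)
  have h1 : C.u G1 ≠ 0 := C.u_pos_node hω _ (fun _ => hl)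
  have h2 : C.u G2 ≠ 0 := C.u_pos_node hω _ (fun i => by
    refine Fin.cases ?_ (fun i => ?_) i
    · exact hX
    · exact hl)
  have hs : size G1 ≠ size G2 := by
    simp only [G1, G2, X]
    rw [size_node, size_node, Fin.sum_univ_succ, Fin.sum_univ_succ]
    simp only [Fin.cons_zero, Fin.cons_succ, size_node]
    have : size leaf = 1 := by rw [leaf, size_node]; simp
    simp [this]
  have ht := C.u_total
  have hle : ∀ P, C.u P ≤ 1 := fun P => (ENNReal.le_tsum P).trans ht
  have key : ∀ F G, ¬ Iso G F → ∑' Q, (if Iso Q F then C.u Q else 0) + C.u G ≤ 1 := by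
    intro F G h
    have : C.u G = ∑' Q, (if Q = G then C.u Q else 0) := by
      rw [tsum_ite_eq]
    rw [this, ← ENNReal.tsum_add]
    refine le_trans (ENNReal.tsum_le_tsum fun Q => ?_) ht
    by_cases hQ : Q = G
    · subst hQ; rw [if_neg h, if_pos rfl, zero_add]
    · rw [if_neg hQ, add_zero]; split_ifs
      · exact le_rfl
      · exact zero_le
  let δ := min (C.u G1) (C.u G2)
  have hδ0 : 0 < δ := lt_min (pos_iff_ne_zero.2 h1) (pos_iff_ne_zero.2 h2)
  have hδ1 : δ ≤ 1 := (min_le_left _ _).trans (hle _)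
  have hδt : δ ≠ ⊤ := (hδ1.trans_lt ENNReal.one_lt_top).ne
  have hlt : 1 - δ < 1 := ENNReal.sub_lt_self ENNReal.one_ne_top one_ne_zero hδ0.ne'
  refine ⟨(1 - δ).toNNReal, ?_, ?_⟩
  · have : ((1 - δ).toNNReal : ℝ≥0∞) < 1 := by rw [ENNReal.coe_toNNReal (hlt.trans ENNReal.one_lt_top).ne]; exact hlt
    exact_mod_cast this
  · intro F
    rw [ENNReal.coe_toNNReal (hlt.trans ENNReal.one_lt_top).ne]
    apply ENNReal.le_sub_of_add_le_right hδt
    by_cases hF : Iso G1 F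
    · have hF2 : ¬ Iso G2 F := fun h => hs ((size_iso hF).trans (size_iso h).symm)
      exact le_trans (by gcongr; exact min_le_right _ _) (key F G2 hF2)
    · exact le_trans (by gcongr; exact min_le_left _ _) (key F G1 hF)

theorem class_eq (P : PT) (g : PT → ℝ≥0∞) (hg : ∀ Q, Iso Q P → g Q = g P) (x : ℝ≥0)
    (hx : Fa P * g P = x) : ((x / autc (real P) : ℝ≥0) : ℝ≥0∞) = ∑' Q, (if Iso Q P then g Q else 0) := by
  have h := mass P g hg
  rw [hx] at h
  have ha : (autc (real P) : ℝ≥0∞) ≠ 0 := by exact_mod_cast (autc_pos _).ne'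
  have : (autc (real P) : ℝ≥0∞) * ((x / autc (real P) : ℝ≥0) : ℝ≥0∞) = x := by
    have : (autc (real P) : ℝ≥0) * (x / autc (real P) : ℝ≥0) = x := mul_div_cancel₀ _ (autc_posN P).ne'
    exact_mod_cast congrArg (fun y : ℝ≥0 => (y : ℝ≥0∞)) this
  exact (ENNReal.mul_right_inj ha (by simp)).1 (this.trans h.symm)

theorem Fa_fz (P : PT) : Fa P * C.fz C.ρ P = ((Om C.ω P * C.ρ ^ size P : ℝ≥0) : ℝ≥0∞) := by
  unfold fz wt
  have : (Fa P : ℝ≥0) * (Om C.ω P / Fa P * C.ρ ^ size P) = Om C.ω P * C.ρ ^ size P := by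
    have : (Fa P : ℝ≥0) ≠ 0 := by exact_mod_cast (Fa_pos P).ne'
    field_simp
  exact_mod_cast congrArg (fun y : ℝ≥0 => (y : ℝ≥0∞)) this

theorem M_bn (P : PT) : (C.M P : ℝ≥0∞) ≤ C.bn (size P) := by
  unfold M
  rw [class_eq P (C.fz C.ρ) (fun Q h => C.fz_iso h) _ (C.Fa_fz P)]
  unfold bn an
  rw [← ENNReal.tsum_mul_right]
  apply ENNReal.tsum_le_tsum
  intro Q
  split_ifs with h1 h2
  · rw [fz, h2]
  · exact absurd (size_iso h1) h2
  · exact zero_le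
  · simp

theorem M_F2_zero (r : ℝ≥0) (hr : ∀ F, ∑' Q, (if Iso Q F then C.u Q else 0) ≤ r) {k} (c : Fin (k+1) → PT) :
    C.M (node (k+1) c) ≤ r * C.M (c 0) := by
  let F := node k fun i => c i.succ
  let x := C.ρ * C.ω (k+1) * ∏ i : Fin k, (Om C.ω (c i.succ) * C.ρ ^ size (c i.succ))
  have h1 : x / autc (real F) ≤ r := by
    have hF : Fa F * C.u F = x := by
      simp only [F, x]
      rw [Fa_node, u]
      push_cast
      have e : ∀ i : Fin k, ((Om C.ω (c i.succ) : ℝ≥0∞) * C.ρ ^ size (c i.succ)) = Fa (c i.succ) * C.fz C.ρ (c i.succ) := by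
        intro i; rw [Fa_fz]; push_cast; rfl
      simp_rw [e]
      rw [Finset.prod_mul_distrib]
      have e2 : ((Nat.factorial k : ℝ≥0∞)) * (((k : ℝ≥0∞) + 1) * C.w (k+1)) = C.ω (k+1) := by
        have : (Nat.factorial k : ℝ≥0) * (((k : ℝ≥0) + 1) * C.w (k+1)) = C.ω (k+1) := by
          unfold w
          rw [Nat.factorial_succ]; push_cast; field_simp
        exact_mod_cast congrArg (fun y : ℝ≥0 => (y : ℝ≥0∞)) this
      rw [← e2]
      ring
    have := class_eq F C.u (fun Q h => C.u_iso h) x hF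
    have h2 := hr F
    rw [← this] at h2
    exact_mod_cast h2
  have h2 : (autc (real (c 0)) : ℝ≥0) * autc (real F) ≤ autc (real (node (k+1) c)) := by
    have := autc_join_att (fun i => real (c i))
    exact_mod_cast this
  have hp : (0 : ℝ≥0) < autc (real (c 0)) * autc (real F) := mul_pos (autc_posN _) (autc_posN _)
  calc C.M (node (k+1) c) ≤ Om C.ω (node (k+1) c) * C.ρ ^ size (node (k+1) c) / (autc (real (c 0)) * autc (real F)) := by
        unfold M; gcongr
    _ = (x / autc (real F)) * C.M (c 0) := by
        rw [num_node, Fin.prod_univ_succ, M, div_mul_div_comm]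
        simp only [x]
        congr 1
        · ring
        · ring
    _ ≤ _ := by gcongr

theorem iso_perm {k} (c : Fin k → PT) (σ : Equiv.Perm (Fin k)) : Iso (node k fun i => c (σ i)) (node k c) :=
  ⟨joinIso (X := fun i => real (c (σ i))) (Y := fun i => real (c i)) σ fun i => RIso.refl _⟩

theorem M_F2 (r : ℝ≥0) (hr : ∀ F, ∑' Q, (if Iso Q F then C.u Q else 0) ≤ r) {k} (c : Fin k → PT) (j : Fin k) :
    C.M (node k c) ≤ r * C.M (c j) := by
  rcases k with _ | k
  · exact j.elim0
  · rw [← C.M_iso (iso_perm c (Equiv.swap 0 j))]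
    refine (C.M_F2_zero r hr _).trans ?_
    simp

theorem M_decay : ∃ B c : ℝ≥0, 0 < B ∧ 0 < c ∧ c < 1 ∧ ∀ P, C.M P ≤ B * c ^ size P := by
  obtain ⟨r, hr1, hr⟩ := C.u_class
  apply decay C.M (C.ρ * ∑ k ∈ C.D, C.ω k) (max 1 C.τ) r (C.D.sup id) (le_max_left _ _) hr1
  · intro k c
    refine (C.M_F1 c).trans ?_
    gcongr
    by_cases hk : k ∈ C.D
    · exact Finset.single_le_sum (f := C.ω) (fun _ _ => zero_le) hk
    · rw [C.hsup k hk]; exact zero_le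
  · intro k c j; exact C.M_F2 r hr c j
  · intro k c hk
    have : k ∉ C.D := fun h => absurd (Finset.le_sup (f := id) h) (not_le.2 hk)
    rw [M, Om_node, C.hsup k this]; simp
  · intro P
    have := (C.M_bn P).trans (C.bn_le _)
    exact (show C.M P ≤ C.τ by exact_mod_cast this).trans (le_max_right _ _)
  · intro η hη
    have h1 := C.bn_tendsto
    have h2 := (h1.eventually_le_const (u := (η : ℝ≥0∞)) (by exact_mod_cast hη))
    obtain ⟨N, hN⟩ := Filter.eventually_atTop.1 h2
    refine ⟨N, fun P hP => ?_⟩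
    have := (C.M_bn P).trans (hN _ hP)
    exact_mod_cast this

end Ctx


namespace RTree
open PT RG

theorem Omg_isom (ω : ℕ → ℝ≥0) {n} {T T' : RTree n} (h : T.Isom T') : Omg ω T = Omg ω T' := by
  obtain ⟨φ, h⟩ := h
  obtain ⟨P, ⟨f⟩⟩ := realize T.toRG
  have g : RIso T.toRG T'.toRG := ⟨φ, h⟩
  rw [Omg_eq ω T P f, Omg_eq ω T' P (f.trans g)]

theorem main_nn (C : Ctx) : ∃ B c : ℝ≥0, 0 < B ∧ 0 < c ∧ c < 1 ∧ ∀ n, 1 ≤ n →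
    (∃ T : RTree n, 0 < Omg C.ω T) →
    (∑ p : RTree n × RTree n, if p.1.Isom p.2 then Omg C.ω p.1 * Omg C.ω p.2 else 0) ≤
      B * c ^ n * (∑ T : RTree n, Omg C.ω T) ^ 2 := by
  obtain ⟨B, c, hB, hc0, hc1, hM⟩ := C.M_decay
  have hρ := C.hρ
  let s := c ^ ((4 : ℝ)⁻¹)
  have hs0 : 0 < s := NNReal.rpow_pos hc0
  have hs1 : s < 1 := NNReal.rpow_lt_one hc1 (by norm_num)
  have hs4 : s ^ 4 = c := by
    have := NNReal.rpow_inv_natCast_pow c (n := 4) (by norm_num)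
    simpa [s] using this
  obtain ⟨κ, hκ, hlow⟩ := C.lower_growth s hs0 hs1
  refine ⟨B / κ, s ^ 2, by positivity, by positivity, pow_lt_one₀ zero_le hs1 (by norm_num), ?_⟩
  rintro n hn ⟨T0, hT0⟩
  set Z := ∑ T : RTree n, Omg C.ω T with hZ
  obtain ⟨m, rfl⟩ : ∃ m, n = m + 1 := ⟨n - 1, by omega⟩
  have hal : 0 < C.al (m+1) := by
    obtain ⟨P, ⟨f⟩⟩ := realize T0.toRG
    have hs : size P = m + 1 := by
      rw [← card_real, Fintype.card_congr f.e.toEquiv]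
      exact Fintype.card_fin _
    have hw : 0 < wt C.ω P := by
      unfold wt
      rw [Omg_eq C.ω T0 P f] at hT0
      have : (0 : ℝ≥0) < Fa P := by exact_mod_cast Fa_pos P
      positivity
    have : (wt C.ω P : ℝ≥0∞) ≤ C.al (m+1) := by
      rw [C.al_coe, an]
      refine le_trans ?_ (ENNReal.le_tsum P)
      rw [if_pos hs]
    exact hw.trans_le (by exact_mod_cast this)
  have hlo : (Nat.factorial (m+1) : ℝ≥0) * C.al (m+1) ≤ Z := by
    have := lower C.ω (m+1)
    rw [← C.al_coe] at this
    exact_mod_cast this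
  have h1 := hlow m hal
  -- numerator
  have hnum : (∑ p : RTree (m+1) × RTree (m+1), if p.1.Isom p.2 then Omg C.ω p.1 * Omg C.ω p.2 else 0) ≤
      Z * (Nat.factorial (m+1) * (B * c ^ (m+1) / C.ρ ^ (m+1))) := by
    rw [Fintype.sum_prod_type, hZ, Finset.sum_mul]
    apply Finset.sum_le_sum
    intro T _
    have e1 : ∀ T' : RTree (m+1), (if T.Isom T' then Omg C.ω T * Omg C.ω T' else 0) =
        if T.Isom T' then Omg C.ω T * Omg C.ω T else 0 := by
      intro T'
      split_ifs with h
      · rw [Omg_isom C.ω h]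
      · rfl
    simp only [e1]
    rw [← Finset.sum_filter, Finset.sum_const, nsmul_eq_mul]
    obtain ⟨P, ⟨f⟩⟩ := realize T.toRG
    have hs : size P = m + 1 := by
      rw [← card_real, Fintype.card_congr f.e.toEquiv]
      exact Fintype.card_fin _
    have h2 := hM P
    unfold Ctx.M at h2
    rw [← Omg_eq C.ω T P f, hs, autc_congr f] at h2
    have hap : (0 : ℝ≥0) < autc T.toRG := by exact_mod_cast autc_pos _
    have h3 : ((Finset.univ.filter fun T' => T.Isom T').card : ℝ≥0) * autc T.toRG ≤ Nat.factorial (m+1) := by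
      exact_mod_cast upper T
    set F : ℝ≥0 := ((Finset.univ.filter fun T' => T.Isom T').card : ℝ≥0)
    rw [div_le_iff₀ hap] at h2
    have h4 : Omg C.ω T ≤ B * c ^ (m+1) / C.ρ ^ (m+1) * autc T.toRG := by
      rw [div_mul_eq_mul_div, le_div_iff₀ (by positivity)]; exact h2
    calc F * (Omg C.ω T * Omg C.ω T) ≤ F * (Omg C.ω T * (B * c ^ (m+1) / C.ρ ^ (m+1) * autc T.toRG)) := by gcongr
      _ = Omg C.ω T * ((F * autc T.toRG) * (B * c ^ (m+1) / C.ρ ^ (m+1))) := by ring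
      _ ≤ _ := by gcongr
  refine hnum.trans ?_
  have eZ : B / κ * (s ^ 2) ^ (m+1) * Z ^ 2 = Z * (B / κ * (s^2)^(m+1) * Z) := by ring
  rw [eZ]
  refine mul_le_mul_right ?_ Z
  have hc : c ^ (m+1) = (s^2)^(m+1) * (s^2)^(m+1) := by rw [← hs4, ← mul_pow]; ring
  have h5 : (s^2)^(m+1) ≤ C.al (m+1) * C.ρ ^ (m+1) / κ := by
    rw [le_div_iff₀ hκ, mul_comm]; exact h1
  calc (Nat.factorial (m+1) : ℝ≥0) * (B * c ^ (m+1) / C.ρ ^ (m+1))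
      = Nat.factorial (m+1) * (B * ((s^2)^(m+1) * (s^2)^(m+1)) / C.ρ ^ (m+1)) := by rw [hc]
    _ ≤ Nat.factorial (m+1) * (B * ((s^2)^(m+1) * (C.al (m+1) * C.ρ ^ (m+1) / κ)) / C.ρ ^ (m+1)) := by gcongr
    _ = (B / κ * (s^2)^(m+1)) * (Nat.factorial (m+1) * C.al (m+1)) := by field_simp
    _ ≤ (B / κ * (s^2)^(m+1)) * Z := by gcongr

end RTree

theorem prob_isom_GW_bounded_degrees_exponential_decay
    (D : Finset ℕ) (hD0 : 0 ∈ D) (hD2 : ∃ d ∈ D, 2 ≤ d)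
    (ω : ℕ → ℝ) (hω : ∀ k ∈ D, 0 < ω k) (hω' : ∀ k ∉ D, ω k = 0) :
    ∃ B c : ℝ, 0 < B ∧ 0 < c ∧ c < 1 ∧
      ∀ n : ℕ, 1 ≤ n →
        (∃ T : RTree n, 0 < ∏ v, ω (T.outdeg v)) →
        (∑ p : RTree n × RTree n,
            if p.1.Isom p.2 then
              (∏ v, ω (p.1.outdeg v)) * (∏ v, ω (p.2.outdeg v))
            else 0) /
          (∑ T : RTree n, ∏ v, ω (T.outdeg v)) ^ 2 ≤ B * c ^ n := by
  have hnn : ∀ k, 0 ≤ ω k := by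
    intro k
    by_cases h : k ∈ D
    · exact (hω k h).le
    · exact (hω' k h).ge
  obtain ⟨ν, rfl⟩ : ∃ ν : ℕ → ℝ≥0, ω = fun k => (ν k : ℝ) := ⟨fun k => ⟨ω k, hnn k⟩, rfl⟩
  obtain ⟨d, hdD, hd⟩ := hD2
  obtain ⟨C, rfl⟩ := Ctx.exists D ν hD0 d hdD hd (fun k hk => NNReal.coe_pos.1 (hω k hk))
    (fun k hk => NNReal.coe_eq_zero.1 (hω' k hk))
  obtain ⟨B, c, hB, hc0, hc1, h⟩ := RTree.main_nn C
  refine ⟨B, c, by exact_mod_cast hB, by exact_mod_cast hc0, by exact_mod_cast hc1, ?_⟩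
  rintro n hn ⟨T, hT⟩
  have hO : ∀ T : RTree n, ∏ v, (C.ω (T.outdeg v) : ℝ) = (RTree.Omg C.ω T : ℝ) := by
    intro T; unfold RTree.Omg; push_cast; rfl
  simp only [hO] at hT ⊢
  have hT' : 0 < RTree.Omg C.ω T := by exact_mod_cast hT
  have hmain := h n hn ⟨T, hT'⟩
  have hZ : (0 : ℝ) < ∑ T : RTree n, (RTree.Omg C.ω T : ℝ) :=
    Finset.sum_pos' (fun _ _ => NNReal.coe_nonneg _) ⟨T, Finset.mem_univ _, hT⟩
  rw [div_le_iff₀ (by positivity)]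
  have h2 : ((∑ p : RTree n × RTree n, if p.1.Isom p.2 then RTree.Omg C.ω p.1 * RTree.Omg C.ω p.2 else 0 : ℝ≥0) : ℝ) ≤
      ((B * c ^ n * (∑ T : RTree n, RTree.Omg C.ω T) ^ 2 : ℝ≥0) : ℝ) := by exact_mod_cast hmain
  push_cast at h2
  refine le_trans (le_of_eq ?_) h2
  apply Finset.sum_congr rfl
  intro p _
  split_ifs <;> simp
end

section
/- For each n ≥ 1 consider the probability measure on rooted labeled trees on n vertices in which a tree T is chosen with probability proportional to Ω(T) = ∏_v outdeg(v)! (the product of the factorials of the out-degrees of all vertices), and let q_n = (∑ Ω(T₁)·Ω(T₂), summed over ordered pairs (T₁, T₂) of isomorphic rooted labeled trees on n vertices) / (∑_T Ω(T))² be the probability that two independent samples are isomorphic. Then q_n decays subexponentially: limsup_{n→∞} q_n^{1/n} = 1; equivalently, for every c ∈ (0,1) there are infinitely many n with q_n > c^n. -/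
open scoped Classical BigOperators

/-- The plane-tree weight of a rooted labeled tree: the product of the
factorials of the out-degrees of all vertices. -/
noncomputable def planeWeight {n : ℕ} (T : RTree n) : ℝ :=
  ∏ v, ((T.outdeg v).factorial : ℝ)

/-- The probability that two independent samples from the measure proportional
to `planeWeight` (i.e. two uniformly random plane trees of size `n`) are
isomorphic. -/
noncomputable def probIsomPlane (n : ℕ) : ℝ :=
  (∑ p : RTree n × RTree n,
      if p.1.Isom p.2 then planeWeight p.1 * planeWeight p.2 else 0) /
    (∑ T : RTree n, planeWeight T) ^ 2


lemma aux_fiber_sum (n m : ℕ) :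
    ∑ f : Fin m → Fin n, ∏ v, (Finset.card {i | f i = v}).factorial = n.ascFactorial m := by
  induction m with
  | zero => simp
  | succ m ih =>
    rw [← (Fin.consEquiv (fun _ => Fin n)).sum_comp, Fintype.sum_prod_type, Finset.sum_comm,
      Nat.ascFactorial_succ, ← ih, Finset.mul_sum]
    refine Finset.sum_congr rfl fun f _ => ?_
    have key : ∀ a : Fin n, ∏ v, (Finset.card {i | (Fin.consEquiv (fun _ => Fin n)) (a, f) i = v}).factorial
        = (Finset.card {i | f i = a} + 1) * ∏ v, (Finset.card {i | f i = v}).factorial := by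
      intro a
      have h1 : ∀ v, Finset.card {i | (Fin.consEquiv (fun _ => Fin n)) (a, f) i = v}
          = (if a = v then 1 else 0) + Finset.card {i | f i = v} := by
        intro v
        rw [Fin.card_filter_univ_succ]
        simp [Fin.consEquiv]
        split_ifs <;> omega
      simp_rw [h1]
      rw [← Finset.mul_prod_erase _ _ (Finset.mem_univ a),
        ← Finset.mul_prod_erase (a := a) _ (fun v => (Finset.card {i | f i = v}).factorial) (Finset.mem_univ a), ← mul_assoc]
      congr 1
      · simp [add_comm 1, Nat.factorial_succ]
      · refine Finset.prod_congr rfl fun v hv => ?_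
        rw [if_neg (Finset.ne_of_mem_erase hv).symm, zero_add]
    simp_rw [key]
    rw [← Finset.sum_mul, Finset.sum_add_distrib]
    congr 1
    have := Finset.card_eq_sum_card_fiberwise (f := f) (s := Finset.univ) (t := Finset.univ) (by simp)
    simp at this
    simp [← this, add_comm]

lemma aux_parent {n : ℕ} (T : RTree n) : ∃ f : Fin n → Fin n,
    (∀ u v, T.graph.Adj u v ↔ u ≠ v ∧ (f u = v ∨ f v = u)) ∧ f T.root = T.root := by
  have hG := T.isTree
  choose p hp _ using (hG.existsUnique_path · T.root)
  have hr : (p T.root).snd = T.root := by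
    have : p T.root = .nil := by
      exact (SimpleGraph.Walk.isPath_iff_nil.1 (hp T.root)).eq_nil
    rw [this]; rfl
  refine ⟨fun v => (p v).snd, fun u v => ⟨fun h => ⟨h.ne, ?_⟩, ?_⟩, hr⟩
  · by_cases hv : v ∈ (p u).support
    · exact Or.inl (hG.isAcyclic.eq_snd_of_adj_start (hp u) h hv).symm
    · right
      have := hG.isAcyclic.mem_support_of_ne_mem_support_of_adj_of_isPath (p := (p v).reverse)
        (q := (p u).reverse) (hp v).reverse (hp u).reverse h.symm (by simpa using hv)
      exact (hG.isAcyclic.eq_snd_of_adj_start (hp v) h.symm (by simpa using this)).symm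
  · have hadj : ∀ u, u ≠ T.root → T.graph.Adj u (p u).snd := fun u hu =>
      SimpleGraph.Walk.adj_snd (SimpleGraph.Walk.not_nil_of_ne hu)
    rintro ⟨hne, h | h⟩ <;> dsimp only at h
    · by_cases hu : u = T.root
      · subst hu; exact absurd (hr.symm.trans h) hne
      · exact h ▸ hadj u hu
    · by_cases hu : v = T.root
      · subst hu; exact absurd (h.symm.trans hr) hne
      · exact (h ▸ hadj v hu).symm

noncomputable def auxPar {n : ℕ} (T : RTree n) : Fin n → Fin n := (aux_parent T).choose

lemma auxPar_adj {n : ℕ} (T : RTree n) (u v : Fin n) :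
    T.graph.Adj u v ↔ u ≠ v ∧ (auxPar T u = v ∨ auxPar T v = u) := (aux_parent T).choose_spec.1 u v

lemma auxPar_root {n : ℕ} (T : RTree n) : auxPar T T.root = T.root := (aux_parent T).choose_spec.2

lemma outdeg_le {n : ℕ} (T : RTree n) (v : Fin n) :
    T.outdeg v ≤ Finset.card {i | auxPar T i = v} := by
  unfold RTree.outdeg
  have hc : Finset.card {i | auxPar T i = v} = ({i | auxPar T i = v} : Set (Fin n)).ncard := by
    rw [Set.ncard_eq_toFinset_card']; simp
  rw [hc]
  split_ifs with h
  · apply Set.ncard_le_ncard _ (Set.toFinite _)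
    intro u hu
    rw [SimpleGraph.mem_neighborSet, auxPar_adj] at hu
    rcases hu with ⟨hne, hu | hu⟩
    · subst h; rw [auxPar_root] at hu; exact absurd hu hne
    · exact hu
  · have : T.graph.neighborSet v ⊆ insert (auxPar T v) {i | auxPar T i = v} := by
      intro u hu
      rw [SimpleGraph.mem_neighborSet, auxPar_adj] at hu
      rcases hu with ⟨hne, hu | hu⟩
      · left; exact hu.symm
      · right; exact hu
    have h1 := Set.ncard_le_ncard this (Set.toFinite _)
    have h2 := Set.ncard_insert_le (auxPar T v) {i | auxPar T i = v}
    omega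

lemma W_le (n : ℕ) : ∑ T : RTree n, planeWeight T ≤ (n.factorial : ℝ) * 8 ^ n := by
  have h1 : ∀ T : RTree n, planeWeight T ≤
      ((∏ v, (Finset.card {i | auxPar T i = v}).factorial : ℕ) : ℝ) := by
    intro T
    unfold planeWeight
    rw [← Nat.cast_prod]
    exact_mod_cast Finset.prod_le_prod' fun v _ => Nat.factorial_le (outdeg_le T v)
  have hinj : Function.Injective (fun T : RTree n => (T.root, auxPar T)) := by
    intro T T' h
    simp only [Prod.mk.injEq] at h
    have hg : T.graph = T'.graph := by
      ext u v
      rw [auxPar_adj, auxPar_adj, h.2]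
    cases T; cases T'; simp_all
  let g : Fin n × (Fin n → Fin n) → ℝ := fun p =>
      ((∏ v, (Finset.card {i | p.2 i = v}).factorial : ℕ) : ℝ)
  have h2 : ∑ T : RTree n, planeWeight T ≤ ∑ p, g p := by
    calc _ ≤ ∑ T : RTree n, g (T.root, auxPar T) := Finset.sum_le_sum fun T _ => h1 T
      _ = ∑ p ∈ Finset.univ.map ⟨_, hinj⟩, g p := by rw [Finset.sum_map]; rfl
      _ ≤ _ := Finset.sum_le_sum_of_subset_of_nonneg (Finset.subset_univ _)
        fun _ _ _ => Nat.cast_nonneg _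
  refine h2.trans ?_
  rw [Fintype.sum_prod_type]
  simp only [g, Finset.sum_const, ← Nat.cast_sum, aux_fiber_sum, Finset.card_univ, Fintype.card_fin]
  rw [Nat.ascFactorial_eq_factorial_mul_choose']
  have h3 : (n + n - 1).choose n ≤ 4 ^ n := by
    calc _ ≤ 2 ^ (n + n - 1) := Nat.choose_le_two_pow _ _
      _ ≤ 2 ^ (n + n) := Nat.pow_le_pow_right (by norm_num) (by omega)
      _ = 4 ^ n := by rw [← two_mul, pow_mul]; norm_num
  have h4 : n ≤ 2 ^ n := Nat.lt_two_pow_self.le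
  have : n * (n.factorial * (n + n - 1).choose n) ≤ n.factorial * 8 ^ n := by
    calc _ ≤ 2 ^ n * (n.factorial * 4 ^ n) := by gcongr
      _ = _ := by rw [show 8 = 2 * 4 by norm_num, mul_pow]; ring
  rw [nsmul_eq_mul]
  exact_mod_cast this

def glueAdj {k M : ℕ} (T : Fin k → RTree M) : Option (Fin k × Fin M) → Option (Fin k × Fin M) → Prop
  | none, none => False
  | none, some (i, a) => a = (T i).root
  | some (i, a), none => a = (T i).root
  | some (i, a), some (j, b) => i = j ∧ (T i).graph.Adj a b

def glue {k M : ℕ} (T : Fin k → RTree M) : SimpleGraph (Option (Fin k × Fin M)) where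
  Adj := glueAdj T
  symm := ⟨by
    rintro (_ | ⟨i, a⟩) (_ | ⟨j, b⟩) h
    · exact h
    · exact h
    · exact h
    · obtain ⟨rfl, h⟩ := h
      exact ⟨rfl, h.symm⟩⟩
  loopless := ⟨by
    rintro (_ | ⟨i, a⟩) h
    · exact h
    · exact h.2.ne rfl⟩

section
variable {k M : ℕ} (T : Fin k → RTree M)

@[simp] lemma glue_nn : ¬ (glue T).Adj none none := fun h => h
@[simp] lemma glue_ns (i a) : (glue T).Adj none (some (i, a)) ↔ a = (T i).root := Iff.rfl
@[simp] lemma glue_sn (i a) : (glue T).Adj (some (i, a)) none ↔ a = (T i).root := Iff.rfl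
@[simp] lemma glue_ss (i a j b) : (glue T).Adj (some (i, a)) (some (j, b)) ↔
  i = j ∧ (T i).graph.Adj a b := Iff.rfl

lemma glue_conn : (glue T).Connected := by
  have h : ∀ x, (glue T).Reachable none x := by
    rintro (_ | ⟨i, a⟩)
    · exact SimpleGraph.Reachable.refl _
    · let f : (T i).graph →g glue T := ⟨fun a => some (i, a), fun h => ⟨rfl, h⟩⟩
      have h1 : (glue T).Reachable none (f (T i).root) := by
        apply SimpleGraph.Adj.reachable
        exact (rfl : (T i).root = (T i).root)
      exact h1.trans (((T i).isTree.connected (T i).root a).map f)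
  have : Nonempty (Option (Fin k × Fin M)) := ⟨none⟩
  exact ⟨fun x y => (h x).symm.trans (h y)⟩

lemma glue_isTree : (glue T).IsTree := by
  rw [SimpleGraph.isTree_iff_connected_and_card]
  refine ⟨glue_conn T, ?_⟩
  have h1 := (glue_conn T).card_vert_le_card_edgeSet_add_one
  refine le_antisymm ?_ h1
  let F : (Σ i, (T i).graph.edgeSet) ⊕ Fin k → Sym2 (Option (Fin k × Fin M)) :=
    Sum.elim (fun x => Sym2.map (fun a => some (x.1, a)) x.2.1)
      (fun i => s(none, some (i, (T i).root)))
  have hsub : (glue T).edgeSet ⊆ Set.range F := by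
    intro e
    induction e using Sym2.ind with
    | _ x y =>
      intro h
      rw [SimpleGraph.mem_edgeSet] at h
      rcases x with _ | ⟨i, a⟩ <;> rcases y with _ | ⟨j, b⟩
      · exact absurd h (glue_nn T)
      · rw [glue_ns] at h; subst h
        exact ⟨Sum.inr j, rfl⟩
      · rw [glue_sn] at h; subst h
        exact ⟨Sum.inr i, Sym2.eq_swap⟩
      · rw [glue_ss] at h
        obtain ⟨rfl, h⟩ := h
        exact ⟨Sum.inl ⟨i, ⟨s(a, b), h⟩⟩, rfl⟩
  have h2 : Nat.card (glue T).edgeSet ≤ Nat.card ((Σ i, (T i).graph.edgeSet) ⊕ Fin k) :=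
    (Nat.card_mono (Set.toFinite _) hsub).trans (Finite.card_range_le F)
  rw [Nat.card_sum, Nat.card_sigma] at h2
  have h3 : ∀ i, Nat.card (T i).graph.edgeSet + 1 = M := fun i => by
    rw [(SimpleGraph.isTree_iff_connected_and_card.1 (T i).isTree).2]; simp
  have h4 : ∑ i, Nat.card (T i).graph.edgeSet + k = k * M := by
    calc _ = ∑ i, (Nat.card (T i).graph.edgeSet + 1) := by simp [Finset.sum_add_distrib]
      _ = ∑ i : Fin k, M := Finset.sum_congr rfl fun i _ => h3 i
      _ = _ := by simp
  have h5 : Nat.card (Option (Fin k × Fin M)) = k * M + 1 := by simp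
  rw [h5]
  simp only [Nat.card_eq_fintype_card (α := Fin k), Fintype.card_fin] at h2
  omega

def gl {n : ℕ} (e : Option (Fin k × Fin M) ≃ Fin n) : RTree n where
  graph := (glue T).comap e.symm
  isTree := (SimpleGraph.Iso.isTree_iff (SimpleGraph.Iso.comap e.symm (glue T))).2 (glue_isTree T)
  root := e none

lemma gl_outdeg_none {n : ℕ} (e : Option (Fin k × Fin M) ≃ Fin n) :
    (gl T e).outdeg (e none) = k := by
  have : (gl T e).graph.neighborSet (e none) = Set.range (fun i => e (some (i, (T i).root))) := by
    ext v
    obtain ⟨x, rfl⟩ := e.surjective v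
    simp only [gl, SimpleGraph.mem_neighborSet, SimpleGraph.comap_adj, Equiv.symm_apply_apply, Set.mem_range, e.injective.eq_iff]
    rcases x with _ | ⟨i, a⟩
    · simp
    · simp; exact eq_comm
  unfold RTree.outdeg
  rw [if_pos (show e none = (gl T e).root from rfl), this, Set.ncard_range_of_injective]
  · simp
  · intro i j h
    simpa using congrArg Prod.fst (Option.some.inj (e.injective h))

lemma gl_outdeg_some {n : ℕ} (e : Option (Fin k × Fin M) ≃ Fin n) (i : Fin k) (a : Fin M) :
    (gl T e).outdeg (e (some (i, a))) = (T i).outdeg a := by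
  have hinj : Function.Injective (fun b => e (some (i, b))) := by
    intro b c h
    simpa using congrArg Prod.snd (Option.some.inj (e.injective h))
  unfold RTree.outdeg
  rw [if_neg (by simp [gl])]
  by_cases ha : a = (T i).root
  · have : (gl T e).graph.neighborSet (e (some (i, a))) =
        insert (e none) ((fun b => e (some (i, b))) '' (T i).graph.neighborSet a) := by
      ext v
      obtain ⟨x, rfl⟩ := e.surjective v
      simp only [gl, SimpleGraph.mem_neighborSet, SimpleGraph.comap_adj, Equiv.symm_apply_apply,
        Set.mem_insert_iff, Set.mem_image, e.injective.eq_iff]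
      rcases x with _ | ⟨j, b⟩
      · simp [ha]
      · simp; tauto
    rw [this, if_pos ha, Set.ncard_insert_of_notMem (by simp), Set.ncard_image_of_injective _ hinj]
    simp
  · have : (gl T e).graph.neighborSet (e (some (i, a))) =
        ((fun b => e (some (i, b))) '' (T i).graph.neighborSet a) := by
      ext v
      obtain ⟨x, rfl⟩ := e.surjective v
      simp only [gl, SimpleGraph.mem_neighborSet, SimpleGraph.comap_adj, Equiv.symm_apply_apply,
        Set.mem_image, e.injective.eq_iff]
      rcases x with _ | ⟨j, b⟩
      · simp [ha]
      · simp; tauto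
    rw [this, if_neg ha, Set.ncard_image_of_injective _ hinj]

lemma gl_weight {n : ℕ} (e : Option (Fin k × Fin M) ≃ Fin n) :
    planeWeight (gl T e) = k.factorial * ∏ i, planeWeight (T i) := by
  unfold planeWeight
  rw [← e.prod_comp, Fintype.prod_option, gl_outdeg_none, Fintype.prod_prod_type]
  simp_rw [gl_outdeg_some]

lemma gl_isom {n : ℕ} (e e' : Option (Fin k × Fin M) ≃ Fin n) (T' : Fin k → RTree M)
    (σ : Equiv.Perm (Fin k)) (h : ∀ i, T i = T' (σ i)) : (gl T e).Isom (gl T' e') := by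
  let p : Option (Fin k × Fin M) ≃ Option (Fin k × Fin M) :=
    Equiv.optionCongr (Equiv.prodCongr σ (Equiv.refl _))
  refine ⟨⟨(e.symm.trans p).trans e', ?_⟩, ?_⟩
  · intro u v
    obtain ⟨x, rfl⟩ := e.surjective u
    obtain ⟨y, rfl⟩ := e.surjective v
    rcases x with _ | ⟨i, a⟩ <;> rcases y with _ | ⟨j, b⟩ <;> simp [gl, p, h]
  · change e' (p (e.symm (e none))) = e' none
    simp [p]

/-- block structure -/
lemma glue_block (T' : Fin k → RTree M) (π : glue T ≃g glue T') (h0 : π none = none) (i : Fin k) :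
    ∃ j, ∀ a, ∃ b, π (some (i, a)) = some (j, b) := by
  have hs : ∀ a, ∃ j b, π (some (i, a)) = some (j, b) := by
    intro a
    rcases hx : π (some (i, a)) with _ | ⟨j, b⟩
    · rw [← h0] at hx
      simpa using π.injective hx
    · exact ⟨j, b, rfl⟩
  choose J B hJ using hs
  refine ⟨J (T i).root, fun a => ?_⟩
  suffices hh : ∀ c, (T i).graph.Reachable c a → J c = J a by
    rw [hh _ ((T i).isTree.connected (T i).root a)]; exact ⟨_, hJ a⟩
  rintro c ⟨w⟩
  induction w with
  | nil => rfl
  | cons h _ ih =>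
    refine Eq.trans ?_ ih
    have h' : (glue T).Adj (some (i, _)) (some (i, _)) := ⟨rfl, h⟩
    rw [← π.map_adj_iff, hJ, hJ] at h'
    exact h'.1

lemma glue_struct (T' : Fin k → RTree M) (π : glue T ≃g glue T') (h0 : π none = none) :
    ∃ (ρ : Equiv.Perm (Fin k)) (τ : Fin k → Equiv.Perm (Fin M)),
      ∀ i a, π (some (i, a)) = some (ρ i, τ i a) := by
  choose r t ht using glue_block T T' π h0
  have h0' : π.symm none = none := by
    have := π.symm_apply_apply none
    rwa [h0] at this
  choose r' t' ht' using glue_block T' T π.symm h0'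
  have hr : Function.Injective r := by
    intro i j hij
    have e1 := ht' (r i) (t i (T i).root)
    have e2 := ht' (r j) (t j (T j).root)
    rw [← ht, π.symm_apply_apply] at e1 e2
    rw [hij] at e1
    have a1 := congrArg Prod.fst (Option.some.inj e1)
    have a2 := congrArg Prod.fst (Option.some.inj e2)
    exact a1.trans a2.symm
  have htt : ∀ i, Function.Injective (t i) := by
    intro i a b hab
    have := (ht i a).trans ((congrArg (fun z => some (r i, z)) hab).trans (ht i b).symm)
    exact congrArg Prod.snd (Option.some.inj (π.injective this))
  exact ⟨Equiv.ofBijective r (Finite.injective_iff_bijective.1 hr),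
    fun i => Equiv.ofBijective _ (Finite.injective_iff_bijective.1 (htt i)), ht⟩

end

lemma glue_inj {k M : ℕ} (T T' : Fin k → RTree M) (h : glue T = glue T') : T = T' := by
  funext i
  have hg : (T i).graph = (T' i).graph := by
    ext a b
    have h1 := glue_ss T i a i b
    rw [h, glue_ss] at h1
    simpa using h1.symm
  have hr : (T i).root = (T' i).root := by
    have h1 := glue_ns T i (T i).root
    rw [h, glue_ns] at h1
    simpa using h1
  cases h1 : T i; cases h2 : T' i; simp_all

lemma fiber_card {k M n : ℕ} (X : RTree n) :
    Finset.card {p : (Option (Fin k × Fin M) ≃ Fin n) × (Fin k → RTree M) | gl p.2 p.1 = X}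
      ≤ k.factorial * M.factorial ^ k := by
  rcases Finset.eq_empty_or_nonempty
    ({p : (Option (Fin k × Fin M) ≃ Fin n) × (Fin k → RTree M) | gl p.2 p.1 = X} : Finset _) with h | ⟨⟨e0, T0⟩, h0⟩
  · rw [h]; simp
  simp only [Finset.mem_filter, Finset.mem_univ, true_and] at h0
  have key : ∀ p : {p : (Option (Fin k × Fin M) ≃ Fin n) × (Fin k → RTree M) // gl p.2 p.1 = X},
      ∃ q : Equiv.Perm (Fin k) × (Fin k → Equiv.Perm (Fin M)),
        ∀ i a, p.1.1 (some (i, a)) = e0 (some (q.1 i, q.2 i a)) := by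
    rintro ⟨⟨e, T⟩, h⟩
    dsimp only at h ⊢
    have hg : (glue T).comap e.symm = (glue T0).comap e0.symm := congrArg RTree.graph (h.trans h0.symm)
    have hroot : e none = e0 none := congrArg RTree.root (h.trans h0.symm)
    let π : glue T ≃g glue T0 := ⟨e.trans e0.symm, by
      intro a b
      have : ((glue T).comap e.symm).Adj (e a) (e b) ↔ ((glue T0).comap e0.symm).Adj (e a) (e b) := by rw [hg]
      simpa using this.symm⟩
    obtain ⟨ρ, τ, hρ⟩ := glue_struct T T0 π (by
      change e0.symm (e none) = none
      rw [hroot]; simp)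
    refine ⟨(ρ, τ), fun i a => ?_⟩
    have : e0.symm (e (some (i, a))) = _ := hρ i a
    rw [← this]; simp
  choose q hq using key
  have hinj : Function.Injective q := by
    rintro ⟨⟨e, T⟩, h⟩ ⟨⟨e', T'⟩, h'⟩ hh
    have he : e = e' := by
      ext1 x
      rcases x with _ | ⟨i, a⟩
      · exact congrArg RTree.root (h.trans h'.symm)
      · have h1 := hq ⟨⟨e, T⟩, h⟩ i a
        have h2 := hq ⟨⟨e', T'⟩, h'⟩ i a
        rw [hh] at h1
        exact h1.trans h2.symm
    subst he
    have hg : (glue T).comap e.symm = (glue T').comap e.symm := congrArg RTree.graph (h.trans h'.symm)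
    have : T = T' := by
      apply glue_inj
      ext a b
      have : ((glue T).comap e.symm).Adj (e a) (e b) ↔ ((glue T').comap e.symm).Adj (e a) (e b) := by rw [hg]
      simpa using this
    subst this
    rfl
  have := Fintype.card_le_of_injective q hinj
  rw [Fintype.card_subtype] at this
  simpa [Fintype.card_perm] using this

lemma exists_perm_of_count {α : Type*} [Fintype α] {k : ℕ} (T T' : Fin k → α)
    (h : ∀ t, Finset.card {i | T i = t} = Finset.card {i | T' i = t}) :
    ∃ σ : Equiv.Perm (Fin k), ∀ i, T i = T' (σ i) := by
  have h1 : ∀ t, Nonempty ({i // T i = t} ≃ {i // T' i = t}) := fun t => by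
    apply Fintype.card_eq.1
    rw [Fintype.card_subtype, Fintype.card_subtype]
    exact h t
  let E := fun t => (h1 t).some
  refine ⟨((Equiv.sigmaFiberEquiv T).symm.trans (Equiv.sigmaCongrRight E)).trans
    (Equiv.sigmaFiberEquiv T'), fun i => ?_⟩
  exact ((E (T i)) ⟨i, rfl⟩).2.symm

noncomputable def Wt (n : ℕ) : ℝ := ∑ T : RTree n, planeWeight T

noncomputable def Iso2 (n : ℕ) : ℝ := ∑ p : RTree n × RTree n,
      if p.1.Isom p.2 then planeWeight p.1 * planeWeight p.2 else 0

lemma planeWeight_pos {n : ℕ} (T : RTree n) : 0 < planeWeight T :=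
  Finset.prod_pos fun v _ => by exact_mod_cast Nat.factorial_pos _

noncomputable def cl {k M : ℕ} (T : Fin k → RTree M) : RTree M → Fin (k + 1) :=
  fun t => ⟨Finset.card {i | T i = t}, by
    have := Finset.card_le_univ ({i | T i = t} : Finset (Fin k))
    simp only [Fintype.card_fin] at this
    omega⟩

lemma exists_class (k M : ℕ) : ∃ c : RTree M → Fin (k + 1),
    Wt M ^ k / ((k : ℝ) + 1) ^ Fintype.card (RTree M) ≤
      ∑ T : Fin k → RTree M with cl T = c, ∏ i, planeWeight (T i) := by
  by_contra! hcon
  have h1 : Wt M ^ k = ∑ T : Fin k → RTree M, ∏ i, planeWeight (T i) := by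
    unfold Wt; exact Fintype.sum_pow _ k
  have h2 := Finset.sum_fiberwise (Finset.univ) (fun T : Fin k → RTree M => cl T)
    (fun T => ∏ i, planeWeight (T i))
  have h3 := Finset.sum_lt_sum_of_nonempty (s := (Finset.univ : Finset (RTree M → Fin (k + 1))))
    ⟨fun _ => 0, Finset.mem_univ _⟩ (fun c _ => hcon c)
  rw [h2, ← h1] at h3
  simp only [Finset.sum_const, Finset.card_univ, Fintype.card_fun, Fintype.card_fin, nsmul_eq_mul,
    Nat.cast_pow, Nat.cast_add, Nat.cast_one] at h3
  rw [mul_div_cancel₀ _ (by positivity)] at h3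
  exact lt_irrefl _ h3

lemma main_lower (k M : ℕ) :
    ((k * M + 1).factorial : ℝ) * (Wt M / M.factorial) ^ k /
        ((k : ℝ) + 1) ^ Fintype.card (RTree M) ≤ Wt (k * M + 1) ∧
    (((k * M + 1).factorial : ℝ) * (Wt M / M.factorial) ^ k /
        ((k : ℝ) + 1) ^ Fintype.card (RTree M)) ^ 2 ≤ Iso2 (k * M + 1) := by
  obtain ⟨c, hc⟩ := exists_class k M
  set n := k * M + 1 with hn
  set A := ∑ T : Fin k → RTree M with cl T = c, ∏ i, planeWeight (T i) with hA
  let Im : Finset (RTree n) := {X | ∃ (e : Option (Fin k × Fin M) ≃ Fin n) (T : Fin k → RTree M),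
    cl T = c ∧ gl T e = X}
  let S : Finset ((Option (Fin k × Fin M) ≃ Fin n) × (Fin k → RTree M)) :=
    Finset.univ ×ˢ Finset.univ.filter (fun T => cl T = c)
  have hcard : Fintype.card (Option (Fin k × Fin M) ≃ Fin n) = n.factorial := by
    have e : Option (Fin k × Fin M) ≃ Fin n := Fintype.equivFinOfCardEq (by simp [hn])
    rw [Fintype.card_equiv e]; simp [hn]
  have hsum1 : ∑ p ∈ S, planeWeight (gl p.2 p.1) = n.factorial * (k.factorial * A) := by
    rw [Finset.sum_product]
    simp only [gl_weight, ← Finset.mul_sum]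
    rw [Finset.sum_const, Finset.card_univ, hcard, nsmul_eq_mul]
    ring
  have hmaps : ∀ p ∈ S, gl p.2 p.1 ∈ Im := by
    rintro ⟨e, T⟩ hp
    simp only [S, Finset.mem_product, Finset.mem_univ, true_and, Finset.mem_filter] at hp
    simp only [Im, Finset.mem_filter, Finset.mem_univ, true_and]
    exact ⟨e, T, hp, rfl⟩
  have hsum2 : ∑ p ∈ S, planeWeight (gl p.2 p.1) ≤
      (k.factorial * M.factorial ^ k) * ∑ X ∈ Im, planeWeight X := by
    rw [← Finset.sum_fiberwise_of_maps_to hmaps, Finset.mul_sum]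
    refine Finset.sum_le_sum fun X _ => ?_
    calc _ = ∑ p ∈ S with gl p.2 p.1 = X, planeWeight X := by
          refine Finset.sum_congr rfl fun p hp => ?_
          rw [(Finset.mem_filter.1 hp).2]
      _ = (Finset.card {p ∈ S | gl p.2 p.1 = X} : ℝ) * planeWeight X := by
          rw [Finset.sum_const, nsmul_eq_mul]
      _ ≤ _ := by
          refine mul_le_mul_of_nonneg_right ?_ (planeWeight_pos X).le
          have h1 := fiber_card (k := k) (M := M) X
          have h2 := (Finset.card_le_card (Finset.filter_subset_filter
            (fun p : (Option (Fin k × Fin M) ≃ Fin n) × (Fin k → RTree M) => gl p.2 p.1 = X)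
              (Finset.subset_univ S))).trans h1
          exact_mod_cast h2
  have hB : (n.factorial : ℝ) * (Wt M / M.factorial) ^ k /
        ((k : ℝ) + 1) ^ Fintype.card (RTree M) ≤ ∑ X ∈ Im, planeWeight X := by
    rw [hsum1] at hsum2
    have hk : (0 : ℝ) < k.factorial := by exact_mod_cast Nat.factorial_pos _
    have hM : (0 : ℝ) < (M.factorial : ℝ) ^ k := by
      have : (0 : ℝ) < M.factorial := by exact_mod_cast Nat.factorial_pos _
      positivity
    have h3 : n.factorial * A ≤ M.factorial ^ k * ∑ X ∈ Im, planeWeight X := by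
      refine le_of_mul_le_mul_left ?_ hk
      linarith
    calc _ = (n.factorial * (Wt M ^ k / ((k : ℝ) + 1) ^ Fintype.card (RTree M))) / M.factorial ^ k := by
          rw [div_pow]; field_simp
      _ ≤ (n.factorial * A) / M.factorial ^ k := by gcongr
      _ ≤ _ := by rw [div_le_iff₀ hM]; linarith
  have h0 : (0 : ℝ) ≤ (n.factorial : ℝ) * (Wt M / M.factorial) ^ k /
        ((k : ℝ) + 1) ^ Fintype.card (RTree M) := by
    have : 0 ≤ Wt M := Finset.sum_nonneg fun T _ => (planeWeight_pos T).le
    positivity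
  refine ⟨hB.trans (Finset.sum_le_sum_of_subset_of_nonneg (Finset.subset_univ _)
    fun X _ _ => (planeWeight_pos X).le), ?_⟩
  refine (pow_le_pow_left₀ h0 hB 2).trans ?_
  rw [sq, Finset.sum_mul_sum, ← Finset.sum_product']
  unfold Iso2
  calc _ = ∑ p ∈ Im ×ˢ Im, if p.1.Isom p.2 then planeWeight p.1 * planeWeight p.2 else 0 := by
        refine Finset.sum_congr rfl fun p hp => ?_
        rw [if_pos]
        simp only [Im, Finset.mem_product, Finset.mem_filter, Finset.mem_univ, true_and] at hp
        obtain ⟨⟨e, T, hT, h1⟩, ⟨e', T', hT', h2⟩⟩ := hp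
        rw [← h1, ← h2]
        obtain ⟨σ, hσ⟩ := exists_perm_of_count T T' (fun t => by
          have := congrFun (hT.trans hT'.symm) t
          simpa [cl] using this)
        exact gl_isom T e e' T' σ hσ
    _ ≤ _ := Finset.sum_le_sum_of_subset_of_nonneg (Finset.subset_univ _) fun p _ _ => by
        split_ifs
        · exact (mul_pos (planeWeight_pos _) (planeWeight_pos _)).le
        · exact le_rfl

lemma Wt_one_pos : 0 < Wt 1 := by
  let T : RTree 1 := ⟨⊥, SimpleGraph.IsTree.of_subsingleton, 0⟩
  exact Finset.sum_pos (fun T _ => planeWeight_pos T) ⟨T, Finset.mem_univ _⟩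

lemma Wt_nonneg (n : ℕ) : 0 ≤ Wt n := Finset.sum_nonneg fun T _ => (planeWeight_pos T).le

lemma growth_const : ∃ L : ℝ, 0 < L ∧ (∀ n, 1 ≤ n → Wt n / n.factorial ≤ L ^ n) ∧
    ∀ θ, 0 < θ → θ < 1 → ∃ M, 1 ≤ M ∧ (θ * L) ^ M ≤ Wt M / M.factorial := by
  let w : ℕ → ℝ := fun n => Wt n / n.factorial
  have hw0 : ∀ n, 0 ≤ w n := fun n => div_nonneg (Wt_nonneg n) (Nat.cast_nonneg _)
  have hw8 : ∀ n, w n ≤ 8 ^ n := fun n => by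
    have : (0 : ℝ) < n.factorial := by exact_mod_cast Nat.factorial_pos _
    simp only [w]
    rw [div_le_iff₀ this, mul_comm]
    exact W_le n
  let S : Set ℝ := (fun n : ℕ => w n ^ ((n : ℝ)⁻¹)) '' {n | 1 ≤ n}
  have hbdd : BddAbove S := by
    refine ⟨8, ?_⟩
    rintro _ ⟨n, hn, rfl⟩
    have hn' : n ≠ 0 := by simp at hn; omega
    calc w n ^ ((n : ℝ)⁻¹) ≤ ((8 : ℝ) ^ n) ^ ((n : ℝ)⁻¹) :=
          Real.rpow_le_rpow (hw0 n) (hw8 n) (by positivity)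
      _ = 8 := Real.pow_rpow_inv_natCast (by norm_num) hn'
  have h1 : w 1 ∈ S := ⟨1, by simp, by simp⟩
  have hL : 0 < sSup S := by
    refine lt_of_lt_of_le ?_ (le_csSup hbdd h1)
    simpa [w] using Wt_one_pos
  refine ⟨sSup S, hL, ?_, ?_⟩
  · intro n hn
    have := le_csSup hbdd (⟨n, hn, rfl⟩ : w n ^ ((n : ℝ)⁻¹) ∈ S)
    calc w n = (w n ^ ((n : ℝ)⁻¹)) ^ n := (Real.rpow_inv_natCast_pow (hw0 n) (by omega)).symm
      _ ≤ _ := pow_le_pow_left₀ (Real.rpow_nonneg (hw0 n) _) this n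
  · intro θ h0 hθ
    obtain ⟨_, ⟨n, hn, rfl⟩, h⟩ := exists_lt_of_lt_csSup ⟨_, h1⟩
      (show θ * sSup S < sSup S by nlinarith)
    refine ⟨n, hn, ?_⟩
    calc _ ≤ (w n ^ ((n : ℝ)⁻¹)) ^ n := pow_le_pow_left₀ (by positivity) h.le n
      _ = w n := Real.rpow_inv_natCast_pow (hw0 n) (by simp at hn; omega)

lemma prob_eq (n : ℕ) : probIsomPlane n = Iso2 n / Wt n ^ 2 := rfl

lemma prob_nonneg (n : ℕ) : 0 ≤ probIsomPlane n := by
  rw [prob_eq]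
  refine div_nonneg (Finset.sum_nonneg fun p _ => ?_) (sq_nonneg _)
  split_ifs
  · exact (mul_pos (planeWeight_pos _) (planeWeight_pos _)).le
  · exact le_rfl

lemma prob_le_one (n : ℕ) : probIsomPlane n ≤ 1 := by
  rw [prob_eq]
  refine div_le_one_of_le₀ ?_ (sq_nonneg _)
  unfold Iso2 Wt
  rw [sq, Finset.sum_mul_sum, ← Finset.sum_product', Finset.univ_product_univ]
  refine Finset.sum_le_sum fun p _ => ?_
  split_ifs
  · exact le_rfl
  · exact (mul_pos (planeWeight_pos _) (planeWeight_pos _)).le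

lemma prob_infinite (c : ℝ) (hc0 : 0 < c) (hc1 : c < 1) :
    {n : ℕ | c ^ n < probIsomPlane n}.Infinite := by
  obtain ⟨L, hL, hup, hlow⟩ := growth_const
  set θ : ℝ := (1 + c) / 2 with hθ
  have hθ0 : 0 < θ := by positivity
  have hθ1 : θ < 1 := by linarith
  have hθc : c < θ ^ 2 := by nlinarith [sq_nonneg (1 - c), mul_pos (sub_pos.2 hc1) (sub_pos.2 hc1)]
  obtain ⟨M, hM, hlow⟩ := hlow θ hθ0 hθ1
  set N := Fintype.card (RTree M)
  have hq : ∀ k : ℕ, ((θ ^ 2) ^ M) ^ k / ((((k : ℝ) + 1) ^ N) ^ 2 * L ^ 2) ≤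
      probIsomPlane (k * M + 1) := by
    intro k
    obtain ⟨hB1, hB2⟩ := main_lower k M
    set n := k * M + 1 with hn
    have hf : (0 : ℝ) < n.factorial := by exact_mod_cast Nat.factorial_pos _
    have hB0 : (0 : ℝ) < (n.factorial : ℝ) * ((θ * L) ^ M) ^ k / ((k : ℝ) + 1) ^ N := by positivity
    have hB3 : (n.factorial : ℝ) * ((θ * L) ^ M) ^ k / ((k : ℝ) + 1) ^ N ≤
       (n.factorial : ℝ) * (Wt M / M.factorial) ^ k / ((k : ℝ) + 1) ^ N := by gcongr
    have hWpos : 0 < Wt n := hB0.trans_le (hB3.trans hB1)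
    have hWle : Wt n ≤ n.factorial * L ^ n := by
      have := hup n (by omega)
      rwa [div_le_iff₀ hf, mul_comm] at this
    rw [prob_eq]
    calc _ = ((n.factorial : ℝ) * ((θ * L) ^ M) ^ k / ((k : ℝ) + 1) ^ N) ^ 2 /
          (n.factorial * L ^ n) ^ 2 := by
          have : L ^ n = (L ^ M) ^ k * L := by rw [hn, pow_succ, mul_comm k M, pow_mul]
          rw [this, mul_pow θ L M]
          field_simp
          try ring
      _ ≤ Iso2 n / (n.factorial * L ^ n) ^ 2 := by
          gcongr
          exact (pow_le_pow_left₀ hB0.le hB3 2).trans hB2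
      _ ≤ Iso2 n / Wt n ^ 2 := by
          have : 0 ≤ Iso2 n := (sq_nonneg _).trans hB2
          gcongr
  set r : ℝ := (c / θ ^ 2) ^ M with hr
  have hr0 : 0 < r := by positivity
  have hr1 : r < 1 := pow_lt_one₀ (by positivity) (by rw [div_lt_one (by positivity)]; exact hθc)
    (by omega)
  have hlim := tendsto_pow_const_mul_const_pow_of_abs_lt_one (2 * N) (r := r) (by rwa [abs_of_pos hr0])
  have hlim' := (hlim.comp (Filter.tendsto_add_atTop_nat 1))
  have hev := hlim'.eventually (gt_mem_nhds (show (0 : ℝ) < r / (c * L ^ 2) by positivity))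
  obtain ⟨K, hK⟩ := Filter.eventually_atTop.1 hev
  refine Set.infinite_of_injective_forall_mem (f := fun j : ℕ => (K + j) * M + 1) ?_ ?_
  · intro a b hab
    simp only [Nat.add_right_cancel_iff] at hab
    have := Nat.eq_of_mul_eq_mul_right (by omega) hab
    omega
  · intro j
    have h := hK (K + j) (by omega)
    set k := K + j
    refine lt_of_lt_of_le ?_ (hq k)
    simp only [Function.comp, Nat.cast_add, Nat.cast_one, pow_succ r k] at h
    rw [lt_div_iff₀ (by positivity)] at h ⊢
    have hk : r ^ k * ((θ ^ 2) ^ M) ^ k = (c ^ M) ^ k := by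
      rw [← mul_pow, hr, ← mul_pow, div_mul_cancel₀ _ (by positivity)]
    have h' : ((k : ℝ) + 1) ^ (2 * N) * r ^ k * (c * L ^ 2) < 1 := by
      refine lt_of_mul_lt_mul_right ?_ hr0.le
      linarith
    have hpos : 0 < ((θ ^ 2) ^ M) ^ k := by positivity
    have e1 : c ^ (k * M + 1) * ((((k : ℝ) + 1) ^ N) ^ 2 * L ^ 2) =
        (((k : ℝ) + 1) ^ (2 * N) * r ^ k * (c * L ^ 2)) * ((θ ^ 2) ^ M) ^ k := by
      rw [pow_succ, mul_comm k M, pow_mul c, ← hk, mul_comm 2 N, pow_mul]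
      ring
    rw [e1]
    nlinarith

/-- The probability that two uniformly random plane trees of
size `n` are isomorphic decays subexponentially: for every `c ∈ (0,1)` there
are infinitely many `n` with `q_n > c^n`. -/
theorem prob_isom_plane_subexponential_decay :
    Filter.limsup (fun n : ℕ => probIsomPlane n ^ ((n : ℝ)⁻¹)) Filter.atTop = 1 ∧
      ∀ c : ℝ, 0 < c → c < 1 → {n : ℕ | c ^ n < probIsomPlane n}.Infinite := by
  refine ⟨?_, prob_infinite⟩
  have hle : ∀ n : ℕ, probIsomPlane n ^ ((n : ℝ)⁻¹) ≤ 1 := fun n =>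
    Real.rpow_le_one (prob_nonneg n) (prob_le_one n) (by positivity)
  have hge : ∀ n : ℕ, 0 ≤ probIsomPlane n ^ ((n : ℝ)⁻¹) := fun n =>
    Real.rpow_nonneg (prob_nonneg n) _
  have hb : Filter.IsBoundedUnder (· ≤ ·) Filter.atTop
      (fun n : ℕ => probIsomPlane n ^ ((n : ℝ)⁻¹)) :=
    Filter.isBoundedUnder_of ⟨1, hle⟩
  have hcb : Filter.IsCoboundedUnder (· ≤ ·) Filter.atTop
      (fun n : ℕ => probIsomPlane n ^ ((n : ℝ)⁻¹)) :=
    (Filter.isBoundedUnder_of ⟨0, hge⟩ : Filter.IsBoundedUnder (· ≥ ·) _ _).isCoboundedUnder_le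
  refine le_antisymm (Filter.limsup_le_of_le hcb (Filter.Eventually.of_forall hle)) ?_
  refine le_of_forall_lt fun b hb1 => ?_
  obtain ⟨c, hc, hc1⟩ := exists_between (max_lt hb1 (zero_lt_one' ℝ))
  obtain ⟨hbc, hc0⟩ := max_lt_iff.1 hc
  refine hbc.trans_le (Filter.le_limsup_of_frequently_le ?_ hb)
  have hinf := Nat.frequently_atTop_iff_infinite.2 (prob_infinite c hc0 hc1)
  refine (hinf.and_eventually (Filter.eventually_ge_atTop 1)).mono ?_
  rintro n ⟨h, hn⟩
  calc c = (c ^ n) ^ ((n : ℝ)⁻¹) := (Real.pow_rpow_inv_natCast hc0.le (by omega)).symm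
    _ ≤ _ := Real.rpow_le_rpow (by positivity) h.le (by positivity)
end
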